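/- arXiv:2405.07296 — 2 statements merged into one kernel-verified Lean document; each statement's English description precedes it below -/
import Mathlib

section
/- Let m ∈ ℕ with m ≥ 1 and let A ⊆ ℕ^m. Then the following are equivalent: (1) there exist functions α₁,…,α_m : 𝒫_f(ℕ^ℕ) → ℕ and H₁,…,H_m : 𝒫_f(ℕ^ℕ) → 𝒫_f(ℕ) such that (a) whenever F, G ∈ 𝒫_f(ℕ^ℕ) and F ⊊ G one has max H_j(F) < min H_j(G) for every j ∈ {1,…,m}, and (b) whenever n ≥ m, G₁ ⊊ G₂ ⊊ ⋯ ⊊ G_n in 𝒫_f(ℕ^ℕ), f_i ∈ G_i for each i ∈ {1,…,n}, and β₁ < β₂ < ⋯ < β_m are nonempty subsets of {1,…,n}, the tuple (Σ_{i∈β₁}(α₁(G_i)+Σ_{t∈H₁(G_i)}f_i(t)), …, Σ_{i∈β_m}(α_m(G_i)+Σ_{t∈H_m(G_i)}f_i(t))) belongs to A; (2) there exist idempotent ultrafilters p₁,…,p_m ∈ 𝒥 such that A ∈ ⊗_{i=1}^m p_i. -/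
namespace MultiCST

/-- The sum `p + q` of ultrafilters on ℕ: `A ∈ p + q` iff `{x : {y : x+y ∈ A} ∈ q} ∈ p`. -/
def uAdd (p q : Ultrafilter ℕ) : Ultrafilter ℕ :=
  p.bind fun x => q.map fun y => x + y

/-- `A ⊆ ℕ` is a J-set. -/
def IsJSet (A : Set ℕ) : Prop :=
  ∀ F : Finset (ℕ → ℕ), F.Nonempty →
    ∃ (a : ℕ) (β : Finset ℕ), β.Nonempty ∧ ∀ f ∈ F, a + ∑ t ∈ β, f t ∈ A

/-- `p ∈ 𝒥`: every member of `p` is a J-set. -/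
def MemJ (p : Ultrafilter ℕ) : Prop := ∀ A : Set ℕ, A ∈ p → IsJSet A

/-- `p` is an idempotent ultrafilter. -/
def IdempotentUF (p : Ultrafilter ℕ) : Prop := uAdd p p = p

/-- `p` is a minimal idempotent ultrafilter. -/
def IsMinimalIdempotent (p : Ultrafilter ℕ) : Prop :=
  IdempotentUF p ∧
    ∀ q : Ultrafilter ℕ, IdempotentUF q → uAdd q p = q → uAdd p q = q → q = p

/-- Tensor product `⊗_{i=1}^m p_i` of ultrafilters on ℕ, as an ultrafilter on `Fin m → ℕ`. -/
def tensor : ∀ m : ℕ, (Fin m → Ultrafilter ℕ) → Ultrafilter (Fin m → ℕ)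
  | 0, _ => pure fun i => i.elim0
  | m + 1, p =>
      (p 0).bind fun x => (tensor m fun i => p i.succ).map fun v => Fin.cons x v

/-- `f : ℕ → ℕ` is (given by) a polynomial with coefficients in ℕ and zero constant term. -/
def IsPolyZeroConst (f : ℕ → ℕ) : Prop :=
  ∃ P : Polynomial ℕ, P.coeff 0 = 0 ∧ ∀ x, f x = P.eval x

/-- The linear combination `a₁·p₁ + a₂·p₂ + ⋯ + a_m·p_m` of ultrafilters on ℕ. -/
def linComb : ∀ m : ℕ, (Fin m → ℕ) → (Fin m → Ultrafilter ℕ) → Ultrafilter ℕ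
  | 0, _, _ => pure 0
  | m + 1, a, p =>
      uAdd ((p 0).map fun x => a 0 * x)
        (linComb m (fun i => a i.succ) fun i => p i.succ)

/-!
(1) ⇒ (2). The Hales–Jewett theorem makes J-sets partition regular, so `𝒥` consists of the
ultrafilters finer than a proper filter. For each coordinate and each finite set `C`, the sums along
chains above `C` form a J-set: a single term of the chain already realizes the J-set condition.
These sets decrease with `C`, and adding to such a sum one taken far enough along gives such a sum
again, so Ellis' lemma produces an idempotent in `𝒥` containing all of them. The tensor product of
these idempotents contains the set of all tuples of sums along a chain, since a chain can always be
prolonged.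

(2) ⇒ (1). For one coordinate choose `α F` and `H F` by recursion on `F`, along with a set of good
points: if `x` is good at `F`, then `α G + ∑ t ∈ H G, f t + x` is good at `G` whenever `G ⊂ F` and
`f ∈ G`. Idempotence keeps these sets large, the J-set property provides the choice, and reading a
chain from its largest term down to its smallest shows that its sums are good. The remaining
coordinates are handled by induction on `m`, the target set varying with `F`.
-/

theorem exists_forall_lt_of_step {ι X : Type*} [LT ι] [WellFoundedLT ι] [Nonempty X]
    {P : ι → X → Prop} {R : ι → X → ι → X → Prop}
    (step : ∀ (i : ι) (g : ι → X), (∀ j < i, P j (g j)) → ∃ x, P i x ∧ ∀ j < i, R j (g j) i x) :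
    ∃ g : ι → X, ∀ i, P i (g i) ∧ ∀ j < i, R j (g j) i (g i) := by
  classical
  choose! next hnext using step
  let below (i : ι) (prev : ∀ j < i, X) (j : ι) : X :=
    if h : j < i then prev j h else Classical.arbitrary X
  let g : ι → X := wellFounded_lt.fix fun i prev => next i (below i prev)
  have g_eq (i : ι) : g i = next i (below i fun j _ => g j) := wellFounded_lt.fix_eq _ i
  have below_eq {i j : ι} (h : j < i) : below i (fun j _ => g j) j = g j := dif_pos h
  have spec (i : ι) (hP : ∀ j < i, P j (g j)) : P i (g i) ∧ ∀ j < i, R j (g j) i (g i) := by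
    rw [g_eq i]
    obtain ⟨h₁, h₂⟩ := hnext i (below i fun j _ => g j) fun j hj => by
      rw [below_eq hj]; exact hP j hj
    exact ⟨h₁, fun j hj => by simpa only [below_eq hj] using h₂ j hj⟩
  have hP (i : ι) : P i (g i) := wellFounded_lt.induction i fun i ih => (spec i ih).1
  exact ⟨g, fun i => spec i fun j _ => hP j⟩

section JSets

/-- The number `a + ∑ t ∈ H, f t` by which a J-set is tested against `f`. -/
def blockSum (a : ℕ) (H : Finset ℕ) (f : ℕ → ℕ) : ℕ := a + ∑ t ∈ H, f t

theorem IsJSet.mono {A B : Set ℕ} (hA : IsJSet A) (hAB : A ⊆ B) : IsJSet B := fun F hF =>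
  let ⟨a, H, hH, h⟩ := hA F hF
  ⟨a, H, hH, fun f hf => hAB (h f hf)⟩

theorem not_isJSet_empty : ¬ IsJSet ∅ := fun h =>
  let ⟨_, _, _, h⟩ := h {0} (Finset.singleton_nonempty 0)
  h 0 (Finset.mem_singleton_self 0)

theorem IsJSet.of_add_left {A : Set ℕ} {x : ℕ} (hA : IsJSet {y | x + y ∈ A}) : IsJSet A :=
  fun F hF =>
    let ⟨a, H, hH, h⟩ := hA F hF
    ⟨x + a, H, hH, fun f hf => by rw [add_assoc]; exact h f hf⟩

theorem IsJSet.exists_gt {A : Set ℕ} (hA : IsJSet A) (F : Finset (ℕ → ℕ)) (k : ℕ) :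
    ∃ (a : ℕ) (H : Finset ℕ), H.Nonempty ∧ (∀ t ∈ H, k < t) ∧ ∀ f ∈ F, blockSum a H f ∈ A := by
  classical
  obtain ⟨a, H, hH, h⟩ :=
    hA (insert 0 (F.image fun f t => f (t + (k + 1)))) (Finset.insert_nonempty _ _)
  refine ⟨a, H.map (addRightEmbedding (k + 1)), hH.map, ?_, fun f hf => ?_⟩
  · simp only [Finset.forall_mem_map, addRightEmbedding_apply]
    omega
  · rw [blockSum, Finset.sum_map]
    exact h _ (Finset.mem_insert_of_mem (Finset.mem_image_of_mem _ hf))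

theorem exists_sum_line_eq_add_sum {S ι τ M : Type*} [Fintype ι] [AddCommMonoid M]
    (l : Combinatorics.Line S ι) (e : ι × τ ↪ τ) (φ : S → τ → M) {β : Finset τ}
    (hβ : β.Nonempty) :
    ∃ (a : M) (γ : Finset τ), γ.Nonempty ∧
      ∀ s, ∑ t ∈ β, ∑ i, φ (l s i) (e (i, t)) = a + ∑ t ∈ γ, φ s t := by
  let moving : Finset ι := Finset.univ.filter fun i => l.idxFun i = none
  have hmoving : moving.Nonempty := l.proper.imp fun i hi => by simp [moving, hi]
  refine ⟨∑ t ∈ β, ∑ i, (l.idxFun i).elim 0 fun s => φ s (e (i, t)),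
    (moving ×ˢ β).map e, (hmoving.product hβ).map, fun s => ?_⟩
  have split (i : ι) (t : τ) : φ (l s i) (e (i, t)) =
      ((l.idxFun i).elim 0 fun s => φ s (e (i, t))) +
        if l.idxFun i = none then φ s (e (i, t)) else 0 := by
    rw [Combinatorics.Line.coe_apply]
    cases l.idxFun i <;> simp
  rw [Finset.sum_map, Finset.sum_product_right]
  simp only [split, Finset.sum_add_distrib, moving, Finset.sum_filter]

theorem IsJSet.or_of_union {A B : Set ℕ} (h : IsJSet (A ∪ B)) : IsJSet A ∨ IsJSet B := by
  classical
  refine or_iff_not_imp_right.2 fun hB F hF => ?_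
  obtain ⟨K, -, hKB⟩ : ∃ K : Finset (ℕ → ℕ), K.Nonempty ∧
      ∀ (a : ℕ) (γ : Finset ℕ), γ.Nonempty → ∃ f ∈ K, a + ∑ t ∈ γ, f t ∉ B := by
    simpa only [IsJSet, not_forall, not_exists, not_and, exists_prop] using hB
  let S := ↥(F ∪ K)
  obtain ⟨ι, _, hι⟩ := Combinatorics.Line.exists_mono_in_high_dimension S Prop
  have := Fintype.toEncodable ι
  let e : ι × ℕ ↪ ℕ := Encodable.encode' (ι × ℕ)
  obtain ⟨f₀, hf₀⟩ := hF
  let g (w : ι → S) (t : ℕ) : ℕ := ∑ i, (w i).1 (e (i, t))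
  have : Nonempty S := ⟨⟨f₀, Finset.mem_union_left _ hf₀⟩⟩
  obtain ⟨b, β, hβ, hb⟩ := h (Finset.univ.image g) (Finset.univ_nonempty.image g)
  obtain ⟨l, c, hc⟩ := hι fun w => b + ∑ t ∈ β, g w t ∈ A
  obtain ⟨a, γ, hγ, hline⟩ := exists_sum_line_eq_add_sum l e (fun s : S => s.1) hβ
  have value (s : S) : b + ∑ t ∈ β, g (l s) t = (b + a) + ∑ t ∈ γ, s.1 t := by
    rw [add_assoc, ← hline s]
  obtain ⟨f₁, hf₁, hf₁B⟩ := hKB (b + a) γ hγ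
  let s₁ : S := ⟨f₁, Finset.mem_union_right _ hf₁⟩
  have hs₁ : b + ∑ t ∈ β, g (l s₁) t ∈ A :=
    (hb _ (Finset.mem_image_of_mem g (Finset.mem_univ _))).resolve_right (by rwa [value])
  refine ⟨b + a, γ, hγ, fun f hf => ?_⟩
  have hs := (hc ⟨f, Finset.mem_union_left _ hf⟩).trans (hc s₁).symm
  simpa only [value] using hs.mpr hs₁

/-- The filter of complements of sets that are not J-sets; `𝒥` is the set of ultrafilters finer than
it. -/
def jFilter : Filter ℕ :=
  Filter.comk (fun A => ¬ IsJSet A) not_isJSet_empty (fun _ hA _ hBA hB => hA (hB.mono hBA))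
    fun _ hA _ hB h => h.or_of_union.elim hA hB

theorem frequently_mem_jFilter {A : Set ℕ} : (∃ᶠ x in jFilter, x ∈ A) ↔ IsJSet A := by
  rw [Filter.Frequently, Filter.Eventually, jFilter, Filter.mem_comk, not_not]
  simp only [Set.compl_ofPred, not_not, Set.ofPred_mem_eq]

theorem memJ_iff_le_jFilter {p : Ultrafilter ℕ} : MemJ p ↔ ↑p ≤ jFilter := by
  refine ⟨fun hp A hA => ?_, fun hp A hA => ?_⟩
  · by_contra hAp
    exact hA (hp _ (Ultrafilter.compl_mem_iff_notMem.2 hAp))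
  · exact frequently_mem_jFilter.1 ((Filter.Eventually.frequently hA).filter_mono hp)

end JSets

section Ultrafilters

theorem MemJ.uAdd {q : Ultrafilter ℕ} (hq : MemJ q) (p : Ultrafilter ℕ) : MemJ (uAdd p q) := by
  intro A hA
  obtain ⟨x, hx⟩ := Ultrafilter.nonempty_of_mem (show {x | {y | x + y ∈ A} ∈ q} ∈ p from hA)
  exact (hq _ hx).of_add_left

theorem IdempotentUF.eventually_add {p : Ultrafilter ℕ} (hp : IdempotentUF p) {P : ℕ → Prop}
    (hP : ∀ᶠ x in p, P x) : ∀ᶠ x in p, ∀ᶠ y in p, P (x + y) := by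
  have : {x | P x} ∈ MultiCST.uAdd p p := by rwa [hp]
  exact this

attribute [local instance] Ultrafilter.addSemigroup in
theorem exists_idempotentUF_le {𝓕 : Filter ℕ} [𝓕.NeBot]
    (hadd : ∀ p q : Ultrafilter ℕ, ↑p ≤ 𝓕 → ↑q ≤ 𝓕 → ↑(uAdd p q) ≤ 𝓕) :
    ∃ p : Ultrafilter ℕ, IdempotentUF p ∧ ↑p ≤ 𝓕 := by
  let S : Set (Ultrafilter ℕ) := {p | ↑p ≤ 𝓕}
  have hS : IsClosed S := by
    have : S = ⋂ A ∈ 𝓕, {p | A ∈ p} := by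
      ext p
      simp only [Set.mem_iInter]
      exact Iff.rfl
    rw [this]
    exact isClosed_biInter fun A _ => ultrafilter_isClosed_basic A
  obtain ⟨p, hp, hpp⟩ := exists_idempotent_in_compact_add_subsemigroup
    Ultrafilter.continuous_add_left S ⟨Ultrafilter.of 𝓕, Ultrafilter.of_le 𝓕⟩ hS.isCompact
    fun p hp q hq => hadd p q hp hq
  exact ⟨p, hpp, hp⟩

end Ultrafilters

section Chains

theorem strictMono_append {P : Type*} [Preorder P] {m n : ℕ} {u : Fin m → P} {v : Fin n → P}
    (hu : StrictMono u) (hv : StrictMono v) (huv : ∀ i j, u i < v j) :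
    StrictMono (Fin.append u v) := by
  intro i j
  refine Fin.addCases (fun i => ?_) (fun i => ?_) i <;>
    refine Fin.addCases (fun j => ?_) (fun j => ?_) j
  · rw [Fin.append_left, Fin.append_left]
    exact fun h => hu h
  · simpa using fun _ => huv i j
  · intro h
    simp only [Fin.lt_def, Fin.val_natAdd, Fin.val_castAdd] at h
    omega
  · simpa using @hv i j

/-- A chain `set 0 ⊂ ⋯ ⊂ set (n - 1)` of finite sets with a selected element of each member. -/
structure SelectedChain (X : Type*) (n : ℕ) where
  set : Fin n → Finset X
  pt : Fin n → X
  strictMono : StrictMono set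
  pt_mem : ∀ i, pt i ∈ set i

variable {X M : Type*} [AddCommMonoid M] {m n : ℕ}

namespace SelectedChain

/-- The sum over the indices in `β` of the values that `w` assigns to the members of the chain. -/
def sum (c : SelectedChain X n) (w : Finset X → X → M) (β : Finset (Fin n)) : M :=
  ∑ i ∈ β, w (c.set i) (c.pt i)

/-- The chain with a single member. -/
def single {F : Finset X} {x : X} (hx : x ∈ F) : SelectedChain X 1 where
  set _ := F
  pt _ := x
  strictMono := Subsingleton.strictMono _
  pt_mem _ := hx

/-- The chain `c` followed by the chain `d`. -/
def append (c : SelectedChain X m) (d : SelectedChain X n) (h : ∀ i j, c.set i ⊂ d.set j) :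
    SelectedChain X (m + n) where
  set := Fin.append c.set d.set
  pt := Fin.append c.pt d.pt
  strictMono := strictMono_append c.strictMono d.strictMono h
  pt_mem := Fin.addCases (fun i => by simpa using c.pt_mem i) fun i => by simpa using d.pt_mem i

variable {c : SelectedChain X m} {d : SelectedChain X n} {h : ∀ i j, c.set i ⊂ d.set j}

theorem sum_append_map_castAdd (w : Finset X → X → M) (β : Finset (Fin m)) :
    (c.append d h).sum w (β.map (Fin.castAddEmb n)) = c.sum w β := by
  simp [sum, append]

theorem sum_append_map_natAdd (w : Finset X → X → M) (β : Finset (Fin n)) :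
    (c.append d h).sum w (β.map (Fin.natAddEmb m)) = d.sum w β := by
  simp [sum, append]

theorem sum_append_univ (w : Finset X → X → M) :
    (c.append d h).sum w Finset.univ = c.sum w Finset.univ + d.sum w Finset.univ := by
  simp [sum, append, Fin.sum_univ_add]

theorem ssubset_append {C : Finset X} (hc : ∀ i, C ⊂ c.set i) (hd : ∀ i, C ⊂ d.set i) (i) :
    C ⊂ (c.append d h).set i :=
  Fin.addCases (fun i => by simpa [append] using hc i) (fun i => by simpa [append] using hd i) i

end SelectedChain

/-- `β₁ < β₂ < ⋯ < β_m` is an increasing sequence of nonempty finite index sets. -/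
structure IsBlockSeq {ι : Type*} [LT ι] (β : Fin m → Finset ι) : Prop where
  nonempty : ∀ l, (β l).Nonempty
  lt : ∀ l l', l < l' → ∀ x ∈ β l, ∀ y ∈ β l', x < y

namespace IsBlockSeq

theorem succ {ι : Type*} [LT ι] {β : Fin (m + 1) → Finset ι} (hβ : IsBlockSeq β) :
    IsBlockSeq fun l => β l.succ :=
  ⟨fun l => hβ.nonempty l.succ, fun l l' h => hβ.lt l.succ l'.succ (Fin.succ_lt_succ_iff.2 h)⟩

theorem map {ι κ : Type*} [LT ι] [LT κ] {β : Fin m → Finset ι} (hβ : IsBlockSeq β) {e : ι ↪ κ}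
    (he : ∀ ⦃x y⦄, x < y → e x < e y) : IsBlockSeq fun l => (β l).map e := by
  refine ⟨fun l => (hβ.nonempty l).map, fun l l' h => ?_⟩
  simp only [Finset.forall_mem_map]
  exact fun x hx y hy => he (hβ.lt l l' h x hx y hy)

theorem cons {ι : Type*} [LT ι] {s : Finset ι} {β : Fin m → Finset ι} (hβ : IsBlockSeq β)
    (hs : s.Nonempty) (hsβ : ∀ l, ∀ x ∈ s, ∀ y ∈ β l, x < y) :
    IsBlockSeq (Fin.cons s β : Fin (m + 1) → Finset ι) := by
  refine ⟨Fin.cases hs hβ.nonempty, Fin.cases ?_ fun l => ?_⟩ <;> refine Fin.cases ?_ fun l' => ?_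
  · exact fun h => absurd h (lt_irrefl _)
  · exact fun _ => hsβ l'
  · exact fun h => absurd h (Fin.not_lt_zero _)
  · exact fun h => hβ.lt l l' (Fin.succ_lt_succ_iff.1 h)

theorem le_of_fin {β : Fin m → Finset (Fin n)} (hβ : IsBlockSeq β) : m ≤ n := by
  choose i hi using hβ.nonempty
  have : StrictMono i := fun l l' h => hβ.lt l l' h _ (hi l) _ (hi l')
  simpa using Fintype.card_le_of_injective i this.injective

end IsBlockSeq

/-- The sums of the values of `w` along nonempty chains whose members all lie strictly above `C`. -/
def chainSums (w : Finset X → X → M) (C : Finset X) : Set M :=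
  {x | ∃ (n : ℕ) (c : SelectedChain X (n + 1)), (∀ i, C ⊂ c.set i) ∧ c.sum w Finset.univ = x}

/-- The tuples of block sums, for the weights `w l`, along chains whose members all lie strictly
above `C`. -/
def chainTuples (w : Fin m → Finset X → X → M) (C : Finset X) : Set (Fin m → M) :=
  {u | ∃ (n : ℕ) (c : SelectedChain X n) (β : Fin m → Finset (Fin n)),
    IsBlockSeq β ∧ (∀ i, C ⊂ c.set i) ∧ (fun l => c.sum (w l) (β l)) = u}

theorem chainSums_antitone (w : Finset X → X → M) : Antitone (chainSums w) := by
  rintro C D hCD _ ⟨n, c, hc, rfl⟩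
  exact ⟨n, c, fun i => hCD.trans_lt (hc i), rfl⟩

theorem exists_add_mem_chainSums {w : Finset X → X → M} {C : Finset X} {x : M}
    (hx : x ∈ chainSums w C) : ∃ K, ∀ y ∈ chainSums w K, x + y ∈ chainSums w C := by
  obtain ⟨n, c, hc, rfl⟩ := hx
  refine ⟨c.set (Fin.last n), ?_⟩
  rintro _ ⟨k, d, hd, rfl⟩
  have hcd (i j) : c.set i ⊂ d.set j := (c.strictMono.monotone (Fin.le_last i)).trans_lt (hd j)
  exact ⟨n + 1 + k, c.append d hcd,
    c.ssubset_append hc fun j => (hc 0).trans (hcd 0 j), c.sum_append_univ w⟩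

theorem exists_cons_mem_chainTuples {w : Fin (m + 1) → Finset X → X → M} {C : Finset X} {x : M}
    (hx : x ∈ chainSums (w 0) C) :
    ∃ K, ∀ u ∈ chainTuples (fun l => w l.succ) K,
      (Fin.cons x u : Fin (m + 1) → M) ∈ chainTuples w C := by
  obtain ⟨n, c, hc, rfl⟩ := hx
  refine ⟨c.set (Fin.last n), ?_⟩
  rintro _ ⟨k, d, β, hβ, hd, rfl⟩
  have hcd (i j) : c.set i ⊂ d.set j := (c.strictMono.monotone (Fin.le_last i)).trans_lt (hd j)
  have hβ' := (hβ.map (e := Fin.natAddEmb (n + 1)) fun x y h => by simpa using h).cons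
    (s := Finset.univ.map (Fin.castAddEmb k)) Finset.univ_nonempty.map fun l => by
      simp only [Finset.forall_mem_map]
      intro i _ j _
      simp only [Fin.castAddEmb_apply, Fin.natAddEmb_apply, Fin.lt_def, Fin.val_castAdd,
        Fin.val_natAdd]
      omega
  refine ⟨_, c.append d hcd, _, hβ', c.ssubset_append hc fun j => (hc 0).trans (hcd 0 j), ?_⟩
  refine funext (Fin.cases ?_ fun l => ?_)
  · exact c.sum_append_map_castAdd _ _
  · exact c.sum_append_map_natAdd _ _

end Chains

section ChainsToUltrafilters

variable {m : ℕ}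

theorem isJSet_chainSums {a : Finset (ℕ → ℕ) → ℕ} {H : Finset (ℕ → ℕ) → Finset ℕ}
    (hH : ∀ F, F.Nonempty → (H F).Nonempty) (C : Finset (ℕ → ℕ)) :
    IsJSet (chainSums (fun F => blockSum (a F) (H F)) C) := by
  classical
  intro F hF
  obtain ⟨g, hg⟩ := Infinite.exists_notMem_finset C
  let G := insert g (C ∪ F)
  have hCG : C ⊂ G := (Finset.ssubset_insert hg).trans_le
    (Finset.insert_subset_insert g Finset.subset_union_left)
  have hFG : F ⊆ G := Finset.subset_union_right.trans (Finset.subset_insert _ _)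
  exact ⟨a G, H G, hH G (hF.mono hFG), fun f hf =>
    ⟨0, .single (hFG hf), fun _ => hCG, Fin.sum_univ_one _⟩⟩

theorem chainSums_mem_uAdd {X : Type*} {w : Finset X → X → ℕ} {p q : Ultrafilter ℕ}
    (hp : ∀ C, chainSums w C ∈ p) (hq : ∀ C, chainSums w C ∈ q) (C : Finset X) :
    chainSums w C ∈ uAdd p q := by
  have : ∀ᶠ x in p, ∀ᶠ y in q, x + y ∈ chainSums w C := by
    filter_upwards [hp C] with x hx
    obtain ⟨K, hK⟩ := exists_add_mem_chainSums hx
    exact Filter.mem_of_superset (hq K) hK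
  exact this

theorem exists_idempotentUF_chainSums_mem {a : Finset (ℕ → ℕ) → ℕ}
    {H : Finset (ℕ → ℕ) → Finset ℕ} (hH : ∀ F, F.Nonempty → (H F).Nonempty) :
    ∃ p : Ultrafilter ℕ, IdempotentUF p ∧ MemJ p ∧
      ∀ C, chainSums (fun F => blockSum (a F) (H F)) C ∈ p := by
  set T := chainSums fun F => blockSum (a F) (H F)
  have le_iff (p : Ultrafilter ℕ) :
      ↑p ≤ ⨅ C, jFilter ⊓ Filter.principal (T C) ↔ MemJ p ∧ ∀ C, T C ∈ p := by
    rw [← inf_iInf, le_inf_iff, le_iInf_iff, memJ_iff_le_jFilter]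
    simp only [Filter.le_principal_iff, Ultrafilter.mem_coe]
  have : (⨅ C, jFilter ⊓ Filter.principal (T C)).NeBot :=
    Filter.iInf_neBot_of_directed'
      (Antitone.directed_ge fun C D hCD =>
        inf_le_inf_left _ (Filter.principal_mono.2 (chainSums_antitone _ hCD)))
      fun C => Filter.frequently_mem_iff_neBot.1
        (frequently_mem_jFilter.2 (isJSet_chainSums hH C))
  obtain ⟨p, hp, hle⟩ := exists_idempotentUF_le
    (𝓕 := ⨅ C, jFilter ⊓ Filter.principal (T C)) fun p q hp hq => by
      rw [le_iff] at hp hq ⊢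
      exact ⟨hq.1.uAdd p, chainSums_mem_uAdd hp.2 hq.2⟩
  exact ⟨p, hp, (le_iff p).1 hle⟩

theorem chainTuples_mem_tensor {X : Type*} {p : Fin m → Ultrafilter ℕ}
    {w : Fin m → Finset X → X → ℕ} (h : ∀ l C, chainSums (w l) C ∈ p l) (C : Finset X) :
    chainTuples w C ∈ tensor m p := by
  induction m generalizing C with
  | zero =>
    have : chainTuples w C = Set.univ := Set.eq_univ_of_forall fun u =>
      ⟨0, ⟨Fin.elim0, Fin.elim0, fun i => i.elim0, fun i => i.elim0⟩, Fin.elim0,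
        ⟨fun l => l.elim0, fun l => l.elim0⟩, fun i => i.elim0, Subsingleton.elim _ _⟩
    exact this ▸ Filter.univ_mem
  | succ m ih =>
    have : ∀ᶠ x in p 0, ∀ᶠ u in tensor m fun l => p l.succ,
        (Fin.cons x u : Fin (m + 1) → ℕ) ∈ chainTuples w C := by
      filter_upwards [h 0 C] with x hx
      obtain ⟨K, hK⟩ := exists_cons_mem_chainTuples hx
      exact Filter.mem_of_superset (ih (fun l => h l.succ) K) hK
    exact this

end ChainsToUltrafilters

section UltrafiltersToChains

theorem IdempotentUF.exists_blockSum {p : Ultrafilter ℕ} (hp : IdempotentUF p) (hJ : MemJ p)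
    {P : ℕ → Prop} (hP : ∀ᶠ x in p, P x) (F : Finset (ℕ → ℕ)) (k : ℕ) :
    ∃ (a : ℕ) (H : Finset ℕ), H.Nonempty ∧ (∀ t ∈ H, k < t) ∧
      ∀ f ∈ F, P (blockSum a H f) ∧ ∀ᶠ y in p, P (blockSum a H f + y) :=
  (hJ _ (hP.and (hp.eventually_add hP))).exists_gt F k

/-- The choice made at one finite set of functions: the translation and the block of its block sums,
and the pairs `(x, v)` that may continue a chain from there on, where `x` is a partial sum in the
current coordinate and `v` stands for the later coordinates. -/
structure Stage (V : Type*) where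
  shift : ℕ
  block : Finset ℕ
  good : ℕ → V → Prop

variable {V : Type*} {p : Ultrafilter ℕ} {q : Filter V} {D : Finset (ℕ → ℕ) → ℕ → V → Prop}

namespace Stage

/-- The block sum of `f` determined by the stage. -/
def value (s : Stage V) (f : ℕ → ℕ) : ℕ := blockSum s.shift s.block f

/-- Every value of `s` on `F` is good, and almost all of its translates are. -/
structure IsAdmissible (p : Ultrafilter ℕ) (q : Filter V) (D : ℕ → V → Prop)
    (F : Finset (ℕ → ℕ)) (s : Stage V) : Prop where
  nonempty : s.block.Nonempty
  good_imp : ∀ x v, s.good x v → D x v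
  good_value : ∀ f ∈ F, ∀ᶠ v in q, s.good (s.value f) v
  good_value_add : ∀ f ∈ F, ∀ᶠ y in p, ∀ᶠ v in q, s.good (s.value f + y) v

/-- The stage `s`, chosen at `F`, is compatible with the stage `s'`, chosen at a larger set. -/
structure Precedes (F : Finset (ℕ → ℕ)) (s s' : Stage V) : Prop where
  block_lt : ∀ t ∈ s.block, ∀ t' ∈ s'.block, t < t'
  good_of_good : ∀ f ∈ F, ∀ x v, s'.good x v → s.good (s.value f + x) v

theorem exists_next (hp : IdempotentUF p) (hJ : MemJ p) (G : Finset (ℕ → ℕ))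
    (hD : ∀ᶠ x in p, ∀ᶠ v in q, D G x v) (s : Finset (ℕ → ℕ) → Stage V)
    (hs : ∀ F < G, IsAdmissible p q (D F) F (s F)) :
    ∃ s', IsAdmissible p q (D G) G s' ∧ ∀ F < G, Precedes F (s F) s' := by
  classical
  let good (x : ℕ) (v : V) : Prop :=
    D G x v ∧ ∀ F ∈ G.ssubsets, ∀ f ∈ F, (s F).good ((s F).value f + x) v
  have hgood : ∀ᶠ x in p, ∀ᶠ v in q, good x v := by
    simp only [good, Filter.eventually_and, Filter.eventually_all_finset]
    exact ⟨hD, fun F hF => (hs F (Finset.mem_ssubsets.1 hF)).good_value_add⟩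
  obtain ⟨a, H, hH, hlt, hval⟩ :=
    hp.exists_blockSum hJ hgood G (G.ssubsets.sup fun F => (s F).block.sup id)
  refine ⟨⟨a, H, good⟩, ⟨hH, fun x v h => h.1, fun f hf => (hval f hf).1,
    fun f hf => (hval f hf).2⟩, fun F hF => ⟨fun t ht t' ht' => ?_, fun f hf x v h =>
      h.2 F (Finset.mem_ssubsets.2 hF) f hf⟩⟩
  have ht_le : t ≤ (s F).block.sup id := Finset.le_sup (f := id) ht
  have hF_le : (s F).block.sup id ≤ G.ssubsets.sup fun F => (s F).block.sup id :=
    Finset.le_sup (f := fun F => (s F).block.sup id) (Finset.mem_ssubsets.2 hF)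
  exact (ht_le.trans hF_le).trans_lt (hlt t' ht')

theorem exists_stages (hp : IdempotentUF p) (hJ : MemJ p)
    (hD : ∀ F, ∀ᶠ x in p, ∀ᶠ v in q, D F x v) :
    ∃ s : Finset (ℕ → ℕ) → Stage V, ∀ G,
      IsAdmissible p q (D G) G (s G) ∧ ∀ F < G, Precedes F (s F) (s G) :=
  have : Nonempty (Stage V) := ⟨⟨0, ∅, fun _ _ => True⟩⟩
  exists_forall_lt_of_step (P := fun F s => IsAdmissible p q (D F) F s)
    (R := fun F s _ s' => Precedes F s s') fun G => exists_next hp hJ G (hD G)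

/-- The tails `v` that may follow any chain ending with a subset of `G`. -/
def tails (s : Finset (ℕ → ℕ) → Stage V) (G : Finset (ℕ → ℕ)) : Set V :=
  {v | ∀ F ⊆ G, ∀ f ∈ F, (s F).good ((s F).value f) v}

theorem tails_antitone (s : Finset (ℕ → ℕ) → Stage V) : Antitone (tails s) :=
  fun _ _ hGG' _ hv F hF => hv F (hF.trans hGG')

theorem tails_mem {s : Finset (ℕ → ℕ) → Stage V} (hs : ∀ F, IsAdmissible p q (D F) F (s F))
    (G : Finset (ℕ → ℕ)) : tails s G ∈ q := by
  have : ∀ᶠ v in q, ∀ F ∈ G.powerset, ∀ f ∈ F, (s F).good ((s F).value f) v := by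
    simp only [Filter.eventually_all_finset]
    exact fun F _ => (hs F).good_value
  simp only [Finset.mem_powerset] at this
  exact this

theorem exists_good_sum {s : Finset (ℕ → ℕ) → Stage V} (hs : ∀ F G, F < G → Precedes F (s F) (s G))
    {n : ℕ} (c : SelectedChain (ℕ → ℕ) n) {v : V} {β : Finset (Fin n)} (hβ : β.Nonempty)
    (hv : ∀ i ∈ β, v ∈ tails s (c.set i)) :
    ∃ i ∈ β, (s (c.set i)).good (c.sum (fun F => (s F).value) β) v := by
  induction β using Finset.induction_on_min with
  | empty => exact absurd hβ Finset.not_nonempty_empty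
  | insert b β hb ih =>
    refine ⟨b, Finset.mem_insert_self b β, ?_⟩
    rcases β.eq_empty_or_nonempty with rfl | hne
    · simpa [SelectedChain.sum] using
        hv b (Finset.mem_insert_self b ∅) _ subset_rfl _ (c.pt_mem b)
    obtain ⟨i, hi, hgood⟩ := ih hne fun i hi => hv i (Finset.mem_insert_of_mem hi)
    rw [SelectedChain.sum, Finset.sum_insert fun h => lt_irrefl b (hb b h)]
    exact (hs _ _ (c.strictMono (hb i hi))).good_of_good _ (c.pt_mem b) _ _ hgood

end Stage

theorem exists_blocks_of_mem_tensor {m : ℕ} {p : Fin m → Ultrafilter ℕ}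
    (hp : ∀ l, IdempotentUF (p l)) (hJ : ∀ l, MemJ (p l))
    {D : Finset (ℕ → ℕ) → Set (Fin m → ℕ)} (hD : Antitone D) (hDp : ∀ F, D F ∈ tensor m p) :
    ∃ (α : Fin m → Finset (ℕ → ℕ) → ℕ) (H : Fin m → Finset (ℕ → ℕ) → Finset ℕ),
      (∀ l F, (H l F).Nonempty) ∧
      (∀ l F G, F ⊂ G → ∀ x ∈ H l F, ∀ y ∈ H l G, x < y) ∧
      ∀ (n : ℕ) (c : SelectedChain (ℕ → ℕ) n) (β : Fin m → Finset (Fin n)), IsBlockSeq β →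
        ∀ C, (∀ l, ∀ i ∈ β l, C ⊆ c.set i) →
          (fun l => c.sum (fun F => blockSum (α l F) (H l F)) (β l)) ∈ D C := by
  induction m with
  | zero =>
    refine ⟨Fin.elim0, Fin.elim0, fun l => l.elim0, fun l => l.elim0, fun n c β _ C _ => ?_⟩
    obtain ⟨v, hv⟩ := Ultrafilter.nonempty_of_mem (hDp C)
    rwa [Subsingleton.elim v] at hv
  | succ m ih =>
    obtain ⟨s, hs⟩ := Stage.exists_stages (q := (tensor m fun l => p l.succ : Filter (Fin m → ℕ)))
      (D := fun F x v => (Fin.cons x v : Fin (m + 1) → ℕ) ∈ D F) (hp 0) (hJ 0) hDp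
    obtain ⟨α, H, hH, hlt, hmem⟩ := ih (fun l => hp l.succ) (fun l => hJ l.succ)
      (Stage.tails_antitone s) (Stage.tails_mem fun F => (hs F).1)
    refine ⟨Fin.cons (fun F => (s F).shift) α, Fin.cons (fun F => (s F).block) H,
      Fin.cases (fun F => (hs F).1.nonempty) hH,
      Fin.cases (fun F G hFG => ((hs G).2 F hFG).block_lt) hlt, fun n c β hβ C hC => ?_⟩
    have htail (i) (hi : i ∈ β 0) :
        (fun l => c.sum (fun F => blockSum (α l F) (H l F)) (β l.succ)) ∈
          Stage.tails s (c.set i) :=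
      hmem n c _ hβ.succ _ fun l j hj =>
        (c.strictMono (hβ.lt 0 l.succ l.succ_pos i hi j hj)).subset
    obtain ⟨i, hi, hsum⟩ := Stage.exists_good_sum (fun F G => (hs G).2 F) c (hβ.nonempty 0) htail
    have := hD (hC 0 i hi) ((hs _).1.good_imp _ _ hsum)
    convert this using 1
    exact funext (Fin.cases rfl fun _ => rfl)

end UltrafiltersToChains

theorem multidimensional_stronger_CST_II_general (m : ℕ) (A : Set (Fin m → ℕ)) :
    List.TFAE [
      ∃ (α : Fin m → Finset (ℕ → ℕ) → ℕ) (H : Fin m → Finset (ℕ → ℕ) → Finset ℕ),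
        (∀ j F, F.Nonempty → (H j F).Nonempty) ∧
        (∀ j F G, F.Nonempty → F ⊂ G → ∀ x ∈ H j F, ∀ y ∈ H j G, x < y) ∧
        ∀ n, m ≤ n → ∀ G : Fin n → Finset (ℕ → ℕ),
          (∀ i, (G i).Nonempty) → (∀ i j, i < j → G i ⊂ G j) →
          ∀ f : Fin n → ℕ → ℕ, (∀ i, f i ∈ G i) →
          ∀ β : Fin m → Finset (Fin n),
            (∀ l, (β l).Nonempty) → (∀ l l', l < l' → ∀ x ∈ β l, ∀ y ∈ β l', x < y) →
            (fun l => ∑ i ∈ β l, (α l (G i) + ∑ t ∈ H l (G i), f i t)) ∈ A,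
      ∃ (α : Fin m → Finset (ℕ → ℕ) → ℕ) (H : Fin m → Finset (ℕ → ℕ) → Finset ℕ),
        (∀ j F, F.Nonempty → (H j F).Nonempty) ∧
        chainTuples (fun l F => blockSum (α l F) (H l F)) ∅ ⊆ A,
      ∃ p : Fin m → Ultrafilter ℕ,
        (∀ i, IdempotentUF (p i)) ∧ (∀ i, MemJ (p i)) ∧ A ∈ tensor m p] := by
  tfae_have 1 → 2 := by
    rintro ⟨α, H, hH, -, hA⟩
    refine ⟨α, H, hH, ?_⟩
    rintro _ ⟨n, c, β, hβ, -, rfl⟩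
    exact hA n hβ.le_of_fin c.set (fun i => ⟨_, c.pt_mem i⟩) (fun _ _ h => c.strictMono h)
      c.pt c.pt_mem β hβ.nonempty hβ.lt
  tfae_have 2 → 3 := by
    rintro ⟨α, H, hH, hA⟩
    choose p hp hJ hT using fun l => exists_idempotentUF_chainSums_mem (a := α l) (hH l)
    exact ⟨p, hp, hJ, Filter.mem_of_superset (chainTuples_mem_tensor hT ∅) hA⟩
  tfae_have 3 → 1 := by
    rintro ⟨p, hp, hJ, hA⟩
    obtain ⟨α, H, hH, hlt, hmem⟩ :=
      exists_blocks_of_mem_tensor hp hJ (D := fun _ => A) antitone_const fun _ => hA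
    exact ⟨α, H, fun j F _ => hH j F, fun j F G _ => hlt j F G,
      fun n _ G _ hG f hf β hβ hβlt => hmem n ⟨G, f, fun i j => hG i j, hf⟩ β ⟨hβ, hβlt⟩ ∅
        fun _ _ _ => Finset.empty_subset _⟩
  tfae_finish

/-- Multidimensional Stronger Central Sets Theorem II (finitary form). -/
theorem multidimensional_stronger_CST_II (m : ℕ) (hm : 1 ≤ m) (A : Set (Fin m → ℕ)) :
    (∃ (α : Fin m → Finset (ℕ → ℕ) → ℕ) (H : Fin m → Finset (ℕ → ℕ) → Finset ℕ),
      (∀ (j : Fin m) (F : Finset (ℕ → ℕ)), F.Nonempty → (H j F).Nonempty) ∧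
      (∀ (j : Fin m) (F G : Finset (ℕ → ℕ)), F.Nonempty → F ⊂ G →
        ∀ x ∈ H j F, ∀ y ∈ H j G, x < y) ∧
      (∀ n : ℕ, m ≤ n → ∀ G : Fin n → Finset (ℕ → ℕ),
        (∀ i, (G i).Nonempty) → (∀ i j, i < j → G i ⊂ G j) →
        ∀ f : Fin n → ℕ → ℕ, (∀ i, f i ∈ G i) →
        ∀ β : Fin m → Finset (Fin n),
          (∀ l, (β l).Nonempty) →
          (∀ l l' : Fin m, l < l' → ∀ x ∈ β l, ∀ y ∈ β l', x < y) →
          (fun l => ∑ i ∈ β l, (α l (G i) + ∑ t ∈ H l (G i), f i t)) ∈ A))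
    ↔
    (∃ p : Fin m → Ultrafilter ℕ,
      (∀ i, IdempotentUF (p i)) ∧ (∀ i, MemJ (p i)) ∧ A ∈ tensor m p) :=
  (multidimensional_stronger_CST_II_general m A).out 0 2

end MultiCST
end

section
/- Let m ∈ ℕ with m ≥ 1, let p be a minimal idempotent ultrafilter on ℕ, let A ∈ ⊗_{i=1}^m p, and let T ∈ 𝒫_f(ℙ). Then there exist functions α : 𝒫_f(ℕ^ℕ) → ℕ and H : 𝒫_f(ℕ^ℕ) → 𝒫_f(ℕ) such that (1) whenever G, K ∈ 𝒫_f(ℕ^ℕ) and G ⊊ K one has max H(G) < min H(K), and (2) whenever n ≥ m, G₁ ⊊ G₂ ⊊ ⋯ ⊊ G_n in 𝒫_f(ℕ^ℕ), f_i ∈ G_i for each i ∈ {1,…,n}, β₁ < β₂ < ⋯ < β_m are nonempty subsets of {1,…,n}, and P₁,…,P_m ∈ T, the tuple (Σ_{i∈β₁}α(G_i) + P₁(Σ_{i∈β₁}Σ_{t∈H(G_i)}f_i(t)), …, Σ_{i∈β_m}α(G_i) + P_m(Σ_{i∈β_m}Σ_{t∈H(G_i)}f_i(t))) belongs to A. 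-/
namespace MultiCST

/-!
Call `A ⊆ ℕ` a polynomial J-set if, given finitely many polynomials `P` and sequences `f`, it
contains a common translate of all `P (∑ t ∈ β, f t)` for some finite set `β`. The ultrafilters
whose members are all polynomial J-sets form a closed two-sided ideal, and such an ideal contains
every minimal idempotent. It is nonempty by polynomial recurrence in a minimal closed invariant set
of ultrafilters on `ℤ` finer than `atTop`; the recurrence is proved by PET induction on the degrees
of the polynomials, with a color focusing argument in the induction step.

A member `A` of the tensor power unfolds into a tree: after each initial segment, the next entry may
be any element of a certain member of `p`. The values `α G` and `H G` are chosen by recursion on the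
finite set `G`. The proper subsets of `G` give rise to finitely many tuples under construction. As
`P (x + z) = P x + Q z` for a polynomial `Q` without constant term, growing the last entry of any of
them, or starting a new entry, amounts to hitting a finite intersection of members of `p`, which is
a polynomial J-set; hence a single choice of `α G` and `H G` serves all of them.
-/

/-! ### Polynomial maps and PET induction -/

section PolyMaps

variable {M G G' : Type*} [AddCommMonoid M] [AddCommGroup G] [AddCommGroup G']

/-- The polarization `y ↦ Q (y + h) - Q y - Q h` of a map `Q` at `h`, as an additive endomorphism
of the group of all maps. It measures the failure of additivity of `Q`. -/
def polarization (h : M) : (M → G) →+ (M → G) where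
  toFun Q y := Q (y + h) - Q y - Q h
  map_zero' := by ext; simp
  map_add' Q R := by ext; simp only [Pi.add_apply]; abel

lemma polarization_apply (h : M) (Q : M → G) (y : M) :
    polarization h Q y = Q (y + h) - Q y - Q h := rfl

variable (M G) in
/-- The polynomial maps `M → G` of degree at most `d` that vanish at `0`, defined by requiring that
every polarization is polynomial of degree at most `d - 1`; the vanishing at `0` is automatic. -/
def polyMaps : ℕ → AddSubgroup (M → G)
  | 0 => ⊥
  | d + 1 => ⨅ h, (polyMaps d).comap (polarization h)

lemma mem_polyMaps_zero {Q : M → G} : Q ∈ polyMaps M G 0 ↔ Q = 0 := AddSubgroup.mem_bot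

lemma mem_polyMaps_succ {d : ℕ} {Q : M → G} :
    Q ∈ polyMaps M G (d + 1) ↔ ∀ h, polarization h Q ∈ polyMaps M G d := by
  simp only [polyMaps, AddSubgroup.mem_iInf, AddSubgroup.mem_comap]

lemma polyMaps_mono : Monotone (polyMaps M G) := by
  refine monotone_nat_of_le_succ fun d ↦ ?_
  induction d with
  | zero => exact bot_le
  | succ d ih => exact iInf_mono fun h ↦ AddSubgroup.comap_mono ih

lemma apply_zero_of_mem_polyMaps {d : ℕ} {Q : M → G} (hQ : Q ∈ polyMaps M G d) : Q 0 = 0 := by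
  induction d generalizing Q with
  | zero => rw [mem_polyMaps_zero.1 hQ, Pi.zero_apply]
  | succ d ih => simpa [polarization_apply] using ih (mem_polyMaps_succ.1 hQ 0)

lemma ne_zero_of_mem_polyMaps {d : ℕ} {Q : M → G} (hQ : Q ∈ polyMaps M G d) (hne : Q ≠ 0) :
    d ≠ 0 := by
  rintro rfl
  exact hne (mem_polyMaps_zero.1 hQ)

lemma comp_mem_polyMaps (ψ : G →+ G') {d : ℕ} {Q : M → G} (hQ : Q ∈ polyMaps M G d) :
    ψ ∘ Q ∈ polyMaps M G' d := by
  induction d generalizing Q with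
  | zero => simp [mem_polyMaps_zero, mem_polyMaps_zero.1 hQ, Function.comp_def, Pi.zero_def]
  | succ d ih =>
    refine mem_polyMaps_succ.2 fun h ↦ ?_
    convert! ih (mem_polyMaps_succ.1 hQ h) using 1
    ext y
    simp [polarization_apply]

lemma addMonoidHom_mem_polyMaps (φ : M →+ G) : ⇑φ ∈ polyMaps M G 1 := by
  refine mem_polyMaps_succ.2 fun h ↦ mem_polyMaps_zero.2 ?_
  ext y
  simp [polarization_apply]

variable {R : Type*}

lemma addMonoidHom_mul_mem_polyMaps [Ring R] (φ : M →+ R) {d : ℕ} {Q : M → R}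
    (hQ : Q ∈ polyMaps M R d) : ⇑φ * Q ∈ polyMaps M R (d + 1) := by
  induction d generalizing Q with
  | zero => simp [mem_polyMaps_zero.1 hQ]
  | succ d ih =>
    refine mem_polyMaps_succ.2 fun h ↦ ?_
    have hQh := mem_polyMaps_succ.1 hQ h
    have expand : polarization h (⇑φ * Q) =
        ⇑φ * polarization h Q + AddMonoidHom.mulLeft (φ h) ∘ polarization h Q +
          AddMonoidHom.mulLeft (φ h) ∘ Q + AddMonoidHom.mulRight (Q h) ∘ φ := by
      ext y
      simp only [polarization_apply, Pi.add_apply, Pi.mul_apply, Function.comp_apply, map_add,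
        AddMonoidHom.coe_mulLeft, AddMonoidHom.coe_mulRight]
      noncomm_ring
    rw [expand]
    refine add_mem (add_mem (add_mem (ih hQh) ?_) (comp_mem_polyMaps _ hQ)) ?_
    · exact polyMaps_mono d.le_succ (comp_mem_polyMaps _ hQh)
    · exact polyMaps_mono (Nat.le_add_left 1 d) (comp_mem_polyMaps _ (addMonoidHom_mem_polyMaps φ))

lemma addMonoidHom_pow_mem_polyMaps [Ring R] (φ : M →+ R) (n : ℕ) :
    ⇑φ ^ (n + 1) ∈ polyMaps M R (n + 1) := by
  induction n with
  | zero => simpa using! addMonoidHom_mem_polyMaps φ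
  | succ n ih =>
    rw [pow_succ']
    exact addMonoidHom_mul_mem_polyMaps φ ih

lemma eval_addMonoidHom_mem_polyMaps [Ring R] (φ : M →+ R) {P : Polynomial R}
    (hP : P.coeff 0 = 0) : (fun y ↦ P.eval (φ y)) ∈ polyMaps M R P.natDegree := by
  have expand : (fun y ↦ P.eval (φ y)) = ∑ i ∈ Finset.range P.natDegree,
      AddMonoidHom.mulLeft (P.coeff (i + 1)) ∘ (⇑φ ^ (i + 1)) := by
    ext y
    simp [Polynomial.eval_eq_sum_range, Finset.sum_range_succ', hP]
  rw [expand]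
  refine sum_mem fun i hi ↦ comp_mem_polyMaps _ ?_
  exact polyMaps_mono (Finset.mem_range.1 hi) (addMonoidHom_pow_mem_polyMaps φ i)

end PolyMaps

section Recurrence

variable {M G : Type*} [AddCommMonoid M] [AddCommGroup G] {V : Set (M → G)}

/-- The maps `y ↦ v (y + h) - v h - w y` with `v ∈ V` and `h ∈ Γ`. -/
def shiftedDifferences (w : M → G) (V : Set (M → G)) (Γ : Set M) : Set (M → G) :=
  Set.image2 (fun v h y ↦ v (y + h) - v h - w y) V Γ

/-- A leading system for a family `V` of polynomial maps: a list of pairs `(d, r)`, with `r` of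
degree at most `d + 1`, such that each member of `V` agrees with some `r` up to a polynomial map of
degree at most `d`. The multiset of the degrees `d` is the weight of `V` in PET induction. -/
structure IsLeadingSystem (L : Multiset (ℕ × (M → G))) (V : Set (M → G)) : Prop where
  mem_polyMaps : ∀ r ∈ L, r.2 ∈ polyMaps M G (r.1 + 1)
  exists_sub_mem : ∀ v ∈ V, ∃ r ∈ L, v - r.2 ∈ polyMaps M G r.1

lemma exists_isLeadingSystem (hV : V.Finite) (hpoly : ∀ v ∈ V, ∃ d, v ∈ polyMaps M G d) :
    ∃ L, IsLeadingSystem L V := by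
  choose! d hd using hpoly
  refine ⟨hV.toFinset.val.map fun v ↦ (d v, v), fun r hr ↦ ?_, fun v hv ↦ ?_⟩
  · obtain ⟨v, hv, rfl⟩ := Multiset.mem_map.1 hr
    exact polyMaps_mono (Nat.le_succ _) (hd v (by simpa using hv))
  · exact ⟨(d v, v), Multiset.mem_map.2 ⟨v, by simpa using hv, rfl⟩, by simp⟩

lemma IsLeadingSystem.exists_polyMaps {L : Multiset (ℕ × (M → G))} (hL : IsLeadingSystem L V)
    {v : M → G} (hv : v ∈ V) :
    ∃ r ∈ L, v - r.2 ∈ polyMaps M G r.1 ∧ v ∈ polyMaps M G (r.1 + 1) := by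
  obtain ⟨r, hr, hvr⟩ := hL.exists_sub_mem v hv
  refine ⟨r, hr, hvr, ?_⟩
  simpa using add_mem (polyMaps_mono (Nat.le_succ _) hvr) (hL.mem_polyMaps r hr)

lemma IsLeadingSystem.apply_zero {L : Multiset (ℕ × (M → G))} (hL : IsLeadingSystem L V)
    {v : M → G} (hv : v ∈ V) : v 0 = 0 := by
  obtain ⟨r, -, -, hvr⟩ := hL.exists_polyMaps hv
  exact apply_zero_of_mem_polyMaps hvr

lemma shiftedDifference_sub_mem_polyMaps {d : ℕ} {v r w : M → G}
    (hv : v ∈ polyMaps M G (d + 1)) (hvr : v - r ∈ polyMaps M G d) (h : M) :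
    (fun y ↦ v (y + h) - v h - w y) - (r - w) ∈ polyMaps M G d := by
  have split : (fun y ↦ v (y + h) - v h - w y) - (r - w) = polarization h v + (v - r) := by
    ext y
    simp only [polarization_apply, Pi.add_apply, Pi.sub_apply]
    abel
  exact split ▸ add_mem (mem_polyMaps_succ.1 hv h) hvr

lemma IsLeadingSystem.shiftedDifferences_diff_zero {d : ℕ} {w : M → G} {L : Multiset (ℕ × (M → G))}
    (hL : IsLeadingSystem ((d, w) ::ₘ L) V) (hd : ∀ r ∈ L, d ≤ r.1) {Γ : Set M}
    {low : Finset (M → G)}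
    (hlow : ∀ q, q ∈ low ↔ q ∈ shiftedDifferences w V Γ \ {0} ∧ q ∈ polyMaps M G d) :
    IsLeadingSystem (L.map (fun r ↦ (r.1, r.2 - w)) + low.val.map (fun q ↦ (d - 1, q)))
      (shiftedDifferences w V Γ \ {0}) := by
  have hw : w ∈ polyMaps M G (d + 1) := hL.mem_polyMaps (d, w) (Multiset.mem_cons_self _ _)
  constructor
  · intro r hr
    rcases Multiset.mem_add.1 hr with hr | hr <;> obtain ⟨s, hs, rfl⟩ := Multiset.mem_map.1 hr
    · have hs' : s.2 ∈ polyMaps M G (s.1 + 1) := hL.mem_polyMaps s (Multiset.mem_cons_of_mem hs)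
      exact sub_mem hs' (polyMaps_mono (Nat.succ_le_succ (hd s hs)) hw)
    · exact polyMaps_mono le_tsub_add ((hlow s).1 hs).2
  · intro q hq
    obtain ⟨v, hv, h, -, rfl⟩ := hq.1
    obtain ⟨r, hr, hvr, hvr'⟩ := hL.exists_polyMaps hv
    have hmem := shiftedDifference_sub_mem_polyMaps (w := w) hvr' hvr h
    rcases Multiset.mem_cons.1 hr with rfl | hr
    · rw [sub_self, sub_zero] at hmem
      exact ⟨(d - 1, _), Multiset.mem_add.2 <| .inr <| Multiset.mem_map_of_mem _ <|
        (hlow _).2 ⟨hq, hmem⟩, by simp⟩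
    · exact ⟨(r.1, r.2 - w), Multiset.mem_add.2 <| .inl <| Multiset.mem_map_of_mem _ hr, hmem⟩

/- Subtracting a leader `w` of least degree keeps the degrees of the other leaders and replaces `w`
itself by leaders of smaller degree. -/
lemma IsLeadingSystem.exists_cutExpand {d : ℕ} {w : M → G} {L : Multiset (ℕ × (M → G))}
    (hL : IsLeadingSystem ((d, w) ::ₘ L) V) (hd : ∀ r ∈ L, d ≤ r.1) (hV : V.Finite) {Γ : Set M}
    (hΓ : Γ.Finite) :
    ∃ L', Relation.CutExpand (· < ·) (L'.map Prod.fst) (((d, w) ::ₘ L).map Prod.fst) ∧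
      IsLeadingSystem L' (shiftedDifferences w V Γ \ {0}) := by
  have hfin : {q ∈ shiftedDifferences w V Γ \ {0} | q ∈ polyMaps M G d}.Finite :=
    (hV.image2 _ hΓ).subset fun q hq ↦ hq.1.1
  have hlow (q : M → G) :
      q ∈ hfin.toFinset ↔ q ∈ shiftedDifferences w V Γ \ {0} ∧ q ∈ polyMaps M G d :=
    hfin.mem_toFinset
  refine ⟨_, ?_, hL.shiftedDifferences_diff_zero hd hlow⟩
  rw [← Multiset.singleton_add, add_comm {(d, w)}]
  simp only [Multiset.map_add, Multiset.map_map, Function.comp_def, Multiset.map_singleton]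
  refine (Relation.cutExpand_add_left _).2 (Relation.cutExpand_singleton fun e he ↦ ?_)
  obtain ⟨q, hq, rfl⟩ := Multiset.mem_map.1 he
  obtain ⟨⟨-, hq0⟩, hqd⟩ := (hlow q).1 hq
  exact Nat.pred_lt (ne_zero_of_mem_polyMaps hqd hq0)

end Recurrence

/-! ### Polynomial recurrence in minimal systems -/

section Dynamics

open scoped Pointwise

variable {M G X ι : Type*} [AddCommMonoid M] [AddCommGroup G] [TopologicalSpace X] [AddAction G X]
  {x : ℕ → M} {V : Set (M → G)} {N : ℕ}

variable (X) in
/-- Every nonempty open set of `X` contains a point which all `v ∈ V`, evaluated at a common sum of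
terms of `x` with arbitrarily large indices, bring back to this set. -/
def IsRecurrentFamily (x : ℕ → M) (V : Set (M → G)) : Prop :=
  ∀ U : Set X, IsOpen U → U.Nonempty → ∀ N : ℕ, ∃ β : Finset ℕ, β.Nonempty ∧ (∀ t ∈ β, N ≤ t) ∧
    ∃ y ∈ U, ∀ v ∈ V, v (∑ t ∈ β, x t) +ᵥ y ∈ U

lemma IsRecurrentFamily.of_diff_zero (h : IsRecurrentFamily X x (V \ {0})) :
    IsRecurrentFamily X x V := by
  intro U hU hne N
  obtain ⟨β, hβ, hN, y, hy, hV⟩ := h U hU hne N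
  refine ⟨β, hβ, hN, y, hy, fun v hv ↦ ?_⟩
  by_cases hv0 : v = 0
  · simpa [hv0] using hy
  · exact hV v ⟨hv, hv0⟩

/-- Color focusing at `y`: for each color `i ∈ K`, some configuration `v (∑ t ∈ β, x t) +ᵥ y`,
`v ∈ V`, lies entirely in the color class `W i`. -/
def IsFocused (x : ℕ → M) (V : Set (M → G)) (N : ℕ) (W : ι → Set X) (K : Finset ι) (y : X) : Prop :=
  ∀ i ∈ K, ∃ β : Finset ℕ, β.Nonempty ∧ (∀ t ∈ β, N ≤ t) ∧
    ∀ v ∈ V, v (∑ t ∈ β, x t) +ᵥ y ∈ W i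

lemma disjoint_of_sup_lt {α β : Finset ℕ} (h : ∀ t ∈ β, α.sup id < t) : Disjoint α β :=
  Finset.disjoint_left.2 fun t hα hβ ↦ (h t hβ).not_ge (Finset.le_sup (f := id) hα)

/- The new focus is `-w (∑ t ∈ β, x t) +ᵥ z`, where `z` and all its translates by the shifted
differences along `β` remain so close to `y` that they see the same colors. -/
lemma IsFocused.exists_insert [ContinuousConstVAdd G X] [DecidableEq ι] {W : ι → Set X}
    {K : Finset ι} {y : X} (hfoc : IsFocused x V N W K y) (hW : ∀ i, IsOpen (W i)) {i₀ : ι}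
    (hy : y ∈ W i₀) (hV : V.Finite) (hV0 : ∀ v ∈ V, v 0 = 0) {w : M → G}
    (hrec : ∀ Γ : Set M, Γ.Finite → IsRecurrentFamily X x (shiftedDifferences w V Γ)) :
    ∃ y', IsFocused x V N W (insert i₀ K) y' := by
  have hold : ∀ i ∈ insert i₀ K, ∃ β : Finset ℕ, (∀ t ∈ β, N ≤ t) ∧
      ∀ v ∈ V, v (∑ t ∈ β, x t) +ᵥ y ∈ W i := by
    intro i hi
    by_cases hiK : i ∈ K
    · exact (hfoc i hiK).imp fun β hβ ↦ hβ.2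
    · obtain rfl := (Finset.mem_insert.1 hi).resolve_right hiK
      exact ⟨∅, by simp, fun v hv ↦ by simpa [hV0 v hv] using hy⟩
  choose! B hBN hB using hold
  let S i := ∑ t ∈ B i, x t
  let U := ⋂ i ∈ insert i₀ K, ⋂ v ∈ V, (v (S i) +ᵥ ·) ⁻¹' W i
  have hU : IsOpen U := isOpen_biInter_finset fun i _ ↦
    hV.isOpen_biInter fun v _ ↦ (hW i).preimage (continuous_const_vadd _)
  have hyU : y ∈ U := Set.mem_iInter₂.2 fun i hi ↦ Set.mem_iInter₂.2 (hB i hi)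
  obtain ⟨β, hβ, hβN, z, -, hz⟩ := hrec _ ((insert i₀ K).finite_toSet.image S) U hU ⟨y, hyU⟩
    (N + ((insert i₀ K).biUnion B).sup id + 1)
  refine ⟨-w (∑ t ∈ β, x t) +ᵥ z, fun i hi ↦ ⟨B i ∪ β, hβ.inr, ?_, fun v hv ↦ ?_⟩⟩
  · simp only [Finset.mem_union]
    rintro t (ht | ht)
    · exact hBN i hi t ht
    · linarith [hβN t ht]
  · have hdisj : Disjoint (B i) β :=
      (disjoint_of_sup_lt fun t ht ↦ by linarith [hβN t ht]).mono_left
        (Finset.subset_biUnion_of_mem B hi)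
    have hmem := Set.mem_iInter₂.1 (Set.mem_iInter₂.1
      (hz _ (Set.mem_image2_of_mem hv (Set.mem_image_of_mem S hi))) i hi) v hv
    rw [Finset.sum_union hdisj, add_comm]
    rw [Set.mem_preimage, vadd_vadd] at hmem
    rw [vadd_vadd]
    convert! hmem using 2
    abel

variable [ContinuousConstVAdd G X] [AddAction.IsMinimal G X]

/- By minimality finitely many translates of an open set cover `X`; using them as colors, each
focusing step adds a new color until the focus itself has a color already focused on. -/
lemma isRecurrentFamily_of_shiftedDifferences [CompactSpace X] (hV : V.Finite)
    (hV0 : ∀ v ∈ V, v 0 = 0) {w : M → G}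
    (hrec : ∀ Γ : Set M, Γ.Finite → IsRecurrentFamily X x (shiftedDifferences w V Γ)) :
    IsRecurrentFamily X x V := by
  classical
  intro U hU hne N
  obtain ⟨I, hI⟩ := isCompact_univ.exists_finite_cover_vadd G hU hne
  by_contra! hnot
  have stage : ∀ n, ∃ K ⊆ I, K.card = n ∧ ∃ y, IsFocused x V N (fun g : G ↦ g +ᵥ U) K y := by
    intro n
    induction n with
    | zero => exact ⟨∅, by simp, rfl, hne.some, by simp [IsFocused]⟩
    | succ n ih =>
      obtain ⟨K, hKI, hK, y, hfoc⟩ := ih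
      obtain ⟨g, hgI, hg⟩ := Set.mem_iUnion₂.1 (hI (Set.mem_univ y))
      have hgK : g ∉ K := by
        intro hgK
        obtain ⟨β, hβ, hN, hβV⟩ := hfoc g hgK
        obtain ⟨v, hv, hvU⟩ := hnot β hβ hN (-g +ᵥ y) (Set.mem_vadd_set_iff_neg_vadd_mem.1 hg)
        rw [vadd_comm] at hvU
        exact hvU (Set.mem_vadd_set_iff_neg_vadd_mem.1 (hβV v hv))
      exact ⟨insert g K, Finset.insert_subset hgI hKI, by rw [Finset.card_insert_of_notMem hgK, hK],
        hfoc.exists_insert (fun g ↦ hU.vadd g) hg hV hV0 hrec⟩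
  obtain ⟨K, hKI, hK, -⟩ := stage (I.card + 1)
  exact (Finset.card_le_card hKI).not_gt (hK ▸ Nat.lt_succ_self _)

theorem IsLeadingSystem.isRecurrentFamily [CompactSpace X] (x : ℕ → M)
    {L : Multiset (ℕ × (M → G))} (hL : IsLeadingSystem L V) (hV : V.Finite) :
    IsRecurrentFamily X x V := by
  induction L using (InvImage.wf (Multiset.map Prod.fst)
    (WellFounded.cutExpand (wellFounded_lt (α := ℕ)))).induction generalizing V with
  | _ L ih =>
  rcases eq_or_ne L 0 with rfl | hne
  · obtain rfl : V = ∅ := Set.eq_empty_of_forall_notMem fun v hv ↦ by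
      simpa using hL.exists_sub_mem v hv
    rintro U - ⟨y, hy⟩ N
    exact ⟨{N}, by simp, by simp, y, hy, by simp⟩
  · obtain ⟨⟨d, w⟩, hw, hmin⟩ := L.exists_min_image Prod.fst hne
    obtain ⟨L, rfl⟩ := Multiset.exists_cons_of_mem hw
    refine isRecurrentFamily_of_shiftedDifferences hV (fun v hv ↦ hL.apply_zero hv) (w := w)
      fun Γ hΓ ↦ .of_diff_zero ?_
    obtain ⟨L', hlt, hL'⟩ :=
      hL.exists_cutExpand (fun r hr ↦ hmin r (Multiset.mem_cons_of_mem hr)) hV hΓ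
    exact ih L' hlt hL' (hV.image2 _ hΓ).sdiff

theorem isRecurrentFamily_of_forall_mem_polyMaps [CompactSpace X] (x : ℕ → M) (hV : V.Finite)
    (hpoly : ∀ v ∈ V, ∃ d, v ∈ polyMaps M G d) : IsRecurrentFamily X x V :=
  have ⟨_, hL⟩ := exists_isLeadingSystem hV hpoly
  hL.isRecurrentFamily x hV

end Dynamics

/-! ### Recurrence for ultrafilters -/

section MinimalSubsystem

open scoped Pointwise

variable {G X : Type*} [TopologicalSpace X]

instance continuousConstVAdd_subAddAction [VAdd G X] [ContinuousConstVAdd G X]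
    (Y : SubAddAction G X) : ContinuousConstVAdd G Y where
  continuous_const_vadd g := ((continuous_const_vadd g).comp continuous_subtype_val).subtype_mk _

/-- The nonempty closed sets that are mapped into themselves by an additive action. -/
def closedInvariantSets (G X : Type*) [VAdd G X] [TopologicalSpace X] : Set (Set X) :=
  {C | C.Nonempty ∧ IsClosed C ∧ ∀ g : G, ∀ y ∈ C, g +ᵥ y ∈ C}

lemma exists_minimal_closedInvariantSets [VAdd G X] [CompactSpace X] {C : Set X}
    (hC : C ∈ closedInvariantSets G X) : ∃ Y ⊆ C, Minimal (· ∈ closedInvariantSets G X) Y := by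
  refine zorn_superset_nonempty _ (fun c hc hchain hne ↦ ?_) C hC
  refine ⟨⋂₀ c, ⟨?_, ?_, ?_⟩, fun s hs ↦ Set.sInter_subset_of_mem hs⟩
  · have := hne.to_subtype
    have hdir : DirectedOn (fun s t : Set X ↦ t ⊆ s) c := IsChain.directedOn hchain.symm
    exact IsCompact.nonempty_sInter_of_directed_nonempty_isCompact_isClosed hdir
      (fun s hs ↦ (hc hs).1) (fun s hs ↦ (hc hs).2.1.isCompact) fun s hs ↦ (hc hs).2.1
  · exact isClosed_sInter fun s hs ↦ (hc hs).2.1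
  · exact fun g y hy s hs ↦ (hc hs).2.2 g y (hy s hs)

theorem exists_isMinimal_subAddAction [AddGroup G] [AddAction G X] [CompactSpace X]
    [ContinuousConstVAdd G X] {C : Set X} (hC : C ∈ closedInvariantSets G X) :
    ∃ Y : SubAddAction G X, (Y : Set X) ⊆ C ∧ (Y : Set X).Nonempty ∧ IsClosed (Y : Set X) ∧
      AddAction.IsMinimal G Y := by
  obtain ⟨Y, hYC, hY, hmin⟩ := exists_minimal_closedInvariantSets hC
  let Y' : SubAddAction G X := ⟨Y, fun g _ ↦ hY.2.2 g _⟩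
  refine ⟨Y', hYC, hY.1, hY.2.1, (isMinimal_iff_isClosed_vadd_invariant G).2 ?_⟩
  intro s hs hinv
  refine s.eq_empty_or_nonempty.imp_right fun hne ↦ Set.eq_univ_of_forall fun y ↦ ?_
  have hsub : Subtype.val '' s ∈ closedInvariantSets G X := by
    refine ⟨hne.image _, hY.2.1.isClosedEmbedding_subtypeVal.isClosedMap _ hs, ?_⟩
    rintro g _ ⟨z, hz, rfl⟩
    exact ⟨g +ᵥ z, hinv g (Set.vadd_mem_vadd_set hz), rfl⟩
  obtain ⟨z, hz, hzy⟩ := hmin hsub (Subtype.coe_image_subset Y s) y.2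
  rwa [← Subtype.ext hzy]

end MinimalSubsystem

section Ultrafilter

variable {G α : Type*}

instance [VAdd G α] : VAdd G (Ultrafilter α) where
  vadd g q := q.map (g +ᵥ ·)

lemma mem_vadd_ultrafilter [VAdd G α] {g : G} {q : Ultrafilter α} {A : Set α} :
    A ∈ g +ᵥ q ↔ (g +ᵥ ·) ⁻¹' A ∈ q := Iff.rfl

instance [AddMonoid G] [AddAction G α] : AddAction G (Ultrafilter α) where
  zero_vadd q := by
    ext A
    simp [mem_vadd_ultrafilter]
  add_vadd g h q := by
    ext A
    simp [mem_vadd_ultrafilter, Set.preimage_preimage, add_vadd]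

instance [VAdd G α] : ContinuousConstVAdd G (Ultrafilter α) where
  continuous_const_vadd g := ultrafilterBasis_is_basis.continuous_iff.2 <|
    Set.forall_mem_range.2 fun A ↦ ultrafilter_isOpen_basic ((g +ᵥ ·) ⁻¹' A)

theorem exists_ultrafilter_polynomial_recurrence {M : Type*} [AddCommMonoid M] [AddCommGroup G]
    [AddAction G α] {f : Filter α} [f.NeBot] (hf : ∀ g : G, f.map (g +ᵥ ·) ≤ f) (x : ℕ → M) :
    ∃ q : Ultrafilter α, ↑q ≤ f ∧ ∀ A ∈ q, ∀ V : Set (M → G), V.Finite →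
      (∀ v ∈ V, ∃ d, v ∈ polyMaps M G d) → ∀ N : ℕ,
        ∃ β : Finset ℕ, β.Nonempty ∧ (∀ t ∈ β, N ≤ t) ∧
          ∃ a ∈ A, ∀ v ∈ V, v (∑ t ∈ β, x t) +ᵥ a ∈ A := by
  have hC : {q : Ultrafilter α | ↑q ≤ f} ∈ closedInvariantSets G (Ultrafilter α) := by
    refine ⟨⟨.of f, Ultrafilter.of_le f⟩, ?_, fun g q hq ↦ (Filter.map_mono hq).trans (hf g)⟩
    have inter : {q : Ultrafilter α | ↑q ≤ f} = ⋂ A ∈ f, {q | A ∈ q} := by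
      ext q
      simp [Filter.le_def]
    exact inter ▸ isClosed_biInter fun A _ ↦ ultrafilter_isClosed_basic A
  obtain ⟨Y, hYC, ⟨q, hqY⟩, hYclosed, hYmin⟩ := exists_isMinimal_subAddAction hC
  have := isCompact_iff_compactSpace.1 hYclosed.isCompact
  refine ⟨q, hYC hqY, fun A hA V hV hpoly N ↦ ?_⟩
  obtain ⟨β, hβ, hN, r, hAr, hr⟩ := isRecurrentFamily_of_forall_mem_polyMaps (X := Y) x hV hpoly
    {r | A ∈ r.1} ((ultrafilter_isOpen_basic A).preimage continuous_subtype_val) ⟨⟨q, hqY⟩, hA⟩ N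
  have hall : ∀ᶠ a in r.1, a ∈ A ∧ ∀ v ∈ V, v (∑ t ∈ β, x t) +ᵥ a ∈ A :=
    Filter.Eventually.and hAr ((Filter.eventually_all_finite hV).2 hr)
  obtain ⟨a, haA, ha⟩ := hall.exists
  exact ⟨β, hβ, hN, a, haA, ha⟩

end Ultrafilter

/-! ### Polynomial J-sets -/

section PolyJSet

/-- The polynomial version of a J-set: `A` contains a common translate of all `P (∑ t ∈ β, f t)`
with `f ∈ F` and `P ∈ T`, for some finite set `β` of arbitrarily large indices. -/
def IsPolyJSet (A : Set ℕ) : Prop :=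
  ∀ F T : Finset (ℕ → ℕ), (∀ P ∈ T, IsPolyZeroConst P) → ∀ N : ℕ,
    ∃ (a : ℕ) (β : Finset ℕ), β.Nonempty ∧ (∀ t ∈ β, N ≤ t) ∧
      ∀ f ∈ F, ∀ P ∈ T, a + P (∑ t ∈ β, f t) ∈ A

lemma IsPolyJSet.of_preimage_add_left {A : Set ℕ} {y : ℕ} (h : IsPolyJSet {x | y + x ∈ A}) :
    IsPolyJSet A := by
  intro F T hT N
  obtain ⟨a, β, hβ, hN, hmem⟩ := h F T hT N
  exact ⟨y + a, β, hβ, hN, fun f hf P hP ↦ by simpa only [add_assoc] using! hmem f hf P hP⟩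

lemma exists_ultrafilter_forall_isPolyJSet : ∃ q : Ultrafilter ℕ, ∀ A ∈ q, IsPolyJSet A := by
  let x (t : ℕ) (f : ℕ → ℕ) : ℤ := f t
  obtain ⟨q, hq, hrec⟩ := exists_ultrafilter_polynomial_recurrence (G := ℤ)
    (fun g ↦ Filter.tendsto_atTop_add_const_left Filter.atTop g Filter.tendsto_id) x
  refine ⟨q.map Int.toNat, fun A hA F T hT N ↦ ?_⟩
  choose! Q hQ0 hQ using hT
  let v (f P : ℕ → ℕ) (y : (ℕ → ℕ) → ℤ) : ℤ := ((Q P).map (Nat.castRingHom ℤ)).eval (y f)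
  have hv : ∀ u ∈ Set.image2 v F T, ∃ d, u ∈ polyMaps ((ℕ → ℕ) → ℤ) ℤ d := by
    rintro _ ⟨f, -, P, hP, rfl⟩
    exact ⟨_, eval_addMonoidHom_mem_polyMaps (Pi.evalAddMonoidHom (fun _ ↦ ℤ) f)
      (by simp [hQ0 P hP])⟩
  obtain ⟨β, hβ, hN, a, ⟨-, ha⟩, hmem⟩ := hrec (Int.toNat ⁻¹' A ∩ Set.Ici 0)
    (Filter.inter_mem hA (hq (Filter.Ici_mem_atTop 0))) _
    (F.finite_toSet.image2 v T.finite_toSet) hv N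
  refine ⟨a.toNat, β, hβ, hN, fun f hf P hP ↦ ?_⟩
  have hvalue : v f P (∑ t ∈ β, x t) = (P (∑ t ∈ β, f t) : ℕ) := by
    have hsum : (∑ t ∈ β, x t) f = ((∑ t ∈ β, f t : ℕ) : ℤ) := by simp [x]
    simp only [v, hsum, hQ P hP]
    exact Polynomial.eval_natCast_map (Nat.castRingHom ℤ) (Q P) _
  have := (hmem _ (Set.mem_image2_of_mem hf hP)).1
  rw [hvalue, Set.mem_preimage, vadd_eq_add] at this
  convert! this using 1
  have : 0 ≤ a := ha
  lia

end PolyJSet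

section Ideals

theorem mem_of_minimal_idempotent {S : Type*} [AddSemigroup S] [TopologicalSpace S] [T2Space S]
    (hcont : ∀ r : S, Continuous (· + r)) {J : Set S} (hJne : J.Nonempty) (hJ : IsCompact J)
    (hleft : ∀ j ∈ J, ∀ s, s + j ∈ J) (hright : ∀ j ∈ J, ∀ s, j + s ∈ J) {p : S} (hp : p + p = p)
    (hmin : ∀ q, q + q = q → q + p = q → p + q = q → q = p) : p ∈ J := by
  have closed : ∀ᵉ (a ∈ (· + p) '' J) (b ∈ (· + p) '' J), a + b ∈ (· + p) '' J := by
    rintro _ ⟨j, hj, rfl⟩ _ ⟨j', -, rfl⟩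
    exact ⟨j + p + j', hright _ (hright j hj p) j', add_assoc _ _ _⟩
  obtain ⟨_, ⟨j, hj, rfl⟩, he⟩ := exists_idempotent_in_compact_add_subsemigroup hcont _
    (hJne.image _) (hJ.image (hcont p)) closed
  set e := j + p
  change e + e = e at he
  have hep : e + p = e := by simp only [e, add_assoc, hp]
  have hpe : p + e = p := by
    refine hmin _ ?_ (by rw [add_assoc, hep]) (by rw [← add_assoc, hp])
    rw [add_assoc, ← add_assoc e, hep, he]
  exact hpe ▸ hleft e (hright j hj p) p

end Ideals

attribute [local instance] Ultrafilter.addSemigroup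

lemma mem_add_ultrafilter {S : Type*} [Add S] {p q : Ultrafilter S} {A : Set S} :
    letI := Ultrafilter.add (M := S)
    A ∈ p + q ↔ {x | {y | x + y ∈ A} ∈ q} ∈ p := Iff.rfl

theorem IsMinimalIdempotent.isPolyJSet {p : Ultrafilter ℕ} (hp : IsMinimalIdempotent p) :
    ∀ A ∈ p, IsPolyJSet A := by
  have hclosed : IsClosed {q : Ultrafilter ℕ | ∀ A ∈ q, IsPolyJSet A} := by
    simp only [imp_iff_not_or, Set.ofPred_forall, Set.ofPred_or]
    exact isClosed_iInter fun A ↦ (ultrafilter_isOpen_basic A).isClosed_compl.union isClosed_const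
  refine mem_of_minimal_idempotent Ultrafilter.continuous_add_left
    exists_ultrafilter_forall_isPolyJSet hclosed.isCompact ?_ ?_ hp.1 hp.2
  · intro j hj q A hA
    obtain ⟨y, hy⟩ := q.nonempty_of_mem (mem_add_ultrafilter.1 hA)
    exact .of_preimage_add_left (hj _ hy)
  · intro j hj q A hA F T hT N
    obtain ⟨a, β, hβ, hN, hmem⟩ := hj _ (mem_add_ultrafilter.1 hA) F T hT N
    have hall : ∀ᶠ y in q, ∀ f ∈ F, ∀ P ∈ T, a + P (∑ t ∈ β, f t) + y ∈ A :=
      (Filter.eventually_all_finset F).2 fun f hf ↦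
        (Filter.eventually_all_finset T).2 fun P hP ↦ hmem f hf P hP
    obtain ⟨y, hy⟩ := hall.exists
    exact ⟨a + y, β, hβ, hN, fun f hf P hP ↦ add_right_comm a _ y ▸ hy f hf P hP⟩

/-! ### The recursive construction -/

section StarSet

variable {S : Type*} [AddSemigroup S] {p : Ultrafilter S} {B : Set S} {x : S}

/-- The set usually written `B⋆`: the points of `B` along which `B` can be shifted back to a member
of the ultrafilter `p`. -/
def starSet (p : Ultrafilter S) (B : Set S) : Set S := {x ∈ B | {y | x + y ∈ B} ∈ p}

lemma starSet_mem (hp : p + p = p) (hB : B ∈ p) : starSet p B ∈ p :=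
  Filter.inter_mem hB (mem_add_ultrafilter.1 (hp.symm ▸ hB))

lemma preimage_add_left_starSet_mem (hp : p + p = p) (hx : x ∈ starSet p B) :
    {y | x + y ∈ starSet p B} ∈ p := by
  refine Filter.mem_of_superset (starSet_mem hp hx.2) fun y hy ↦ ⟨hy.1, ?_⟩
  simpa only [add_assoc] using! hy.2

end StarSet

/- `D l` collects the admissible next entries after the initial segment `l`. -/
lemma exists_tree_of_mem_tensor {p : Ultrafilter ℕ} {m : ℕ} {A : Set (Fin m → ℕ)}
    (hA : A ∈ tensor m fun _ ↦ p) :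
    ∃ D : List ℕ → Set ℕ, (∀ l, D l ∈ p) ∧
      ∀ v : Fin m → ℕ, (∀ i : Fin m, v i ∈ D ((List.ofFn v).take i)) → v ∈ A := by
  induction m with
  | zero =>
    refine ⟨fun _ ↦ .univ, fun _ ↦ Filter.univ_mem, fun v _ ↦ ?_⟩
    rw [Subsingleton.elim v]
    exact hA
  | succ m ih =>
    let tail (x : ℕ) : Set (Fin m → ℕ) := {w | (Fin.cons x w : Fin (m + 1) → ℕ) ∈ A}
    choose! D hDp hD using fun x (hx : tail x ∈ tensor m fun _ ↦ p) ↦ ih hx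
    classical
    let D' : List ℕ → Set ℕ
      | [] => {x | tail x ∈ tensor m fun _ ↦ p}
      | x :: l => if tail x ∈ tensor m fun _ ↦ p then D x l else .univ
    refine ⟨D', fun l ↦ ?_, fun v hv ↦ ?_⟩
    · match l with
      | [] => exact hA
      | x :: l =>
        by_cases hx : tail x ∈ tensor m fun _ ↦ p
        · simpa [D', hx] using hDp x hx l
        · simp only [D', if_neg hx]
          exact Filter.univ_mem
    · have h0 : tail (v 0) ∈ tensor m fun _ ↦ p := by simpa [D'] using hv 0
      have hmem := hD (v 0) h0 (Fin.tail v) fun i ↦ by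
        simpa [D', h0, List.ofFn_succ] using! hv i.succ
      simpa [tail] using hmem

lemma IsPolyZeroConst.exists_add_eq {P : ℕ → ℕ} (hP : IsPolyZeroConst P) (x : ℕ) :
    ∃ Q : ℕ → ℕ, IsPolyZeroConst Q ∧ ∀ z, P (x + z) = P x + Q z := by
  obtain ⟨R, -, hR⟩ := hP
  let S : Polynomial ℕ := R.comp (Polynomial.C x + Polynomial.X)
  let Q : Polynomial ℕ := Polynomial.X * S.divX
  have hS : S.coeff 0 = P x := by simp [Polynomial.coeff_zero_eq_eval_zero, S, hR]
  refine ⟨fun z ↦ Q.eval z, ⟨Q, by simp [Q], fun _ ↦ rfl⟩, fun z ↦ ?_⟩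
  calc P (x + z) = S.eval z := by simp [S, hR]
    _ = (Q + Polynomial.C (S.coeff 0)).eval z := by rw [Polynomial.X_mul_divX_add]
    _ = P x + Q.eval z := by rw [Polynomial.eval_add, Polynomial.eval_C, hS, add_comm]

/-- A tuple under construction: the finished `entries`, and an unfinished last entry
`base + poly arg` whose `base` and `arg` may still grow. -/
structure PartialTuple where
  entries : List ℕ
  base : ℕ
  arg : ℕ
  poly : ℕ → ℕ

namespace PartialTuple

variable {p : Ultrafilter ℕ} {D : List ℕ → Set ℕ} {T : Finset (ℕ → ℕ)} {S : Set PartialTuple}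

/-- The current value of the last entry of a partial tuple. -/
def value (σ : PartialTuple) : ℕ := σ.base + σ.poly σ.arg

/-- The partial tuple with `a` added to the base and `z` to the argument of its last entry. -/
def extend (a z : ℕ) (σ : PartialTuple) : PartialTuple :=
  ⟨σ.entries, σ.base + a, σ.arg + z, σ.poly⟩

/-- The last entry of `σ` is one that the tree `D` allows after the finished entries, even in the
stable sense given by `starSet`. -/
def Admissible (p : Ultrafilter ℕ) (D : List ℕ → Set ℕ) (σ : PartialTuple) : Prop :=
  IsPolyZeroConst σ.poly ∧ σ.value ∈ starSet p (D σ.entries)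

/-- The lists of entries after which a new entry can be started: the empty one, and those obtained
by declaring the last entry of some `σ ∈ S` finished. -/
def prefixes (S : Set PartialTuple) : Set (List ℕ) :=
  insert [] ((fun σ ↦ σ.entries ++ [σ.value]) '' S)

/-- The partial tuples obtained from `S` when the new base `a` and argument `z` are either added to
the last entry or used to start a new entry. -/
def successors (T : Finset (ℕ → ℕ)) (S : Set PartialTuple) (a z : ℕ) : Set PartialTuple :=
  extend a z '' S ∪ Set.image2 (fun l P ↦ ⟨l, a, z, P⟩) (prefixes S) T

lemma finite_prefixes (hS : S.Finite) : (prefixes S).Finite := (hS.image _).insert _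

lemma finite_successors (hS : S.Finite) (a z : ℕ) : (successors T S a z).Finite :=
  (hS.image _).union ((finite_prefixes hS).image2 _ T.finite_toSet)

lemma exists_forall_successors_admissible (hp : p + p = p) (hJ : ∀ A ∈ p, IsPolyJSet A)
    (hD : ∀ l, D l ∈ p) (hT : ∀ P ∈ T, IsPolyZeroConst P) (hS : S.Finite)
    (hadm : ∀ σ ∈ S, Admissible p D σ) (G : Finset (ℕ → ℕ)) (N : ℕ) :
    ∃ (a : ℕ) (β : Finset ℕ), β.Nonempty ∧ (∀ t ∈ β, N ≤ t) ∧
      ∀ f ∈ G, ∀ σ ∈ successors T S a (∑ t ∈ β, f t), Admissible p D σ := by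
  classical
  choose! Q hQ hadd using fun σ hσ ↦ (hadm σ hσ).1.exists_add_eq σ.arg
  have hTQ : ∀ P ∈ T ∪ hS.toFinset.image Q, IsPolyZeroConst P := by
    simp only [Finset.mem_union, Finset.mem_image, hS.mem_toFinset]
    rintro P (hP | ⟨σ, hσ, rfl⟩)
    exacts [hT P hP, hQ σ hσ]
  have hmem : (⋂ l ∈ prefixes S, starSet p (D l)) ∩
      ⋂ σ ∈ S, {y | σ.value + y ∈ starSet p (D σ.entries)} ∈ p :=
    Filter.inter_mem
      ((Filter.biInter_mem (finite_prefixes hS)).2 fun l _ ↦ starSet_mem hp (hD l))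
      ((Filter.biInter_mem hS).2 fun σ hσ ↦ preimage_add_left_starSet_mem hp (hadm σ hσ).2)
  obtain ⟨a, β, hβ, hN, hval⟩ := hJ _ hmem G _ hTQ N
  refine ⟨a, β, hβ, hN, fun f hf ↦ ?_⟩
  rintro _ (⟨σ, hσ, rfl⟩ | ⟨l, hl, P, hP, rfl⟩)
  · have hQmem : Q σ ∈ T ∪ hS.toFinset.image Q :=
      Finset.mem_union_right _ (Finset.mem_image_of_mem Q (hS.mem_toFinset.2 hσ))
    have hvalue : (σ.extend a (∑ t ∈ β, f t)).value = σ.value + (a + Q σ (∑ t ∈ β, f t)) := by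
      simp only [value, extend, hadd σ hσ]
      ring
    exact ⟨(hadm σ hσ).1, hvalue ▸ Set.mem_iInter₂.1 (hval f hf _ hQmem).2 σ hσ⟩
  · exact ⟨hT P hP, Set.mem_iInter₂.1 (hval f hf P (Finset.mem_union_left _ hP)).1 l hl⟩

end PartialTuple

open PartialTuple

lemma exists_forall_rel_image_Iio {ι β : Type*} [Preorder ι] [WellFoundedLT ι]
    (hfin : ∀ i : ι, (Set.Iio i).Finite) {r : ι → Set β → β → Prop}
    (h : ∀ i S, S.Finite → ∃ b, r i S b) : ∃ Φ : ι → β, ∀ i, r i (Φ '' Set.Iio i) (Φ i) := by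
  choose step hstep using h
  have hrange (i : ι) (prev : ∀ j, j < i → β) : (Set.range fun j : Set.Iio i ↦ prev j j.2).Finite :=
    have := (hfin i).to_subtype
    Set.finite_range _
  let Φ : ι → β := wellFounded_lt.fix fun i prev ↦ step i _ (hrange i prev)
  have hΦ (i : ι) : Φ i = step i _ (hrange i fun j _ ↦ Φ j) := wellFounded_lt.fix_eq _ i
  refine ⟨Φ, fun i ↦ ?_⟩
  have := hstep i _ (hrange i fun j _ ↦ Φ j)
  rwa [← hΦ, ← Set.image_eq_range] at this

/-- The data chosen for one finite set of functions: the values `base` of `α` and `block` of `H`,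
and the finitely many partial tuples, all admissible, that use this set last. -/
structure Stage_s4 (p : Ultrafilter ℕ) (D : List ℕ → Set ℕ) where
  base : ℕ
  block : Finset ℕ
  tuples : Set PartialTuple
  block_nonempty : block.Nonempty
  finite_tuples : tuples.Finite
  admissible : ∀ σ ∈ tuples, Admissible p D σ

namespace Stage_s4

variable {p : Ultrafilter ℕ} {D : List ℕ → Set ℕ} {T : Finset (ℕ → ℕ)}

/-- The stage `c` of the finite set `G` is compatible with the family `C` of earlier stages. -/
structure Follows (T G : Finset (ℕ → ℕ)) (C : Set (Stage_s4 p D)) (c : Stage_s4 p D) : Prop where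
  block_lt : ∀ c' ∈ C, ∀ s ∈ c'.block, ∀ t ∈ c.block, s < t
  successors_subset : ∀ f ∈ G,
    successors T (⋃ c' ∈ C, c'.tuples) c.base (∑ t ∈ c.block, f t) ⊆ c.tuples

lemma exists_follows (hp : p + p = p) (hJ : ∀ A ∈ p, IsPolyJSet A) (hD : ∀ l, D l ∈ p)
    (hT : ∀ P ∈ T, IsPolyZeroConst P) (G : Finset (ℕ → ℕ)) {C : Set (Stage_s4 p D)} (hC : C.Finite) :
    ∃ c, Follows T G C c := by
  have hS : (⋃ c ∈ C, c.tuples).Finite := hC.biUnion fun c _ ↦ c.finite_tuples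
  obtain ⟨N, hN⟩ := (hC.biUnion fun c _ ↦ c.block.finite_toSet).bddAbove
  obtain ⟨a, β, hβ, hNβ, hadm⟩ := exists_forall_successors_admissible hp hJ hD hT hS
    (fun σ hσ ↦ have ⟨c, _, hσc⟩ := Set.mem_iUnion₂.1 hσ; c.admissible σ hσc) G (N + 1)
  refine ⟨⟨a, β, ⋃ f ∈ G, successors T (⋃ c ∈ C, c.tuples) a (∑ t ∈ β, f t), hβ,
    G.finite_toSet.biUnion fun f _ ↦ finite_successors hS _ _, ?_⟩, ?_, ?_⟩
  · intro σ hσ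
    obtain ⟨f, hf, hσf⟩ := Set.mem_iUnion₂.1 hσ
    exact hadm f hf σ hσf
  · intro c hc s hs t ht
    exact (hN (Set.mem_biUnion hc hs)).trans_lt (hNβ t ht)
  · exact fun f hf ↦ Set.subset_biUnion_of_mem (u := fun f ↦ successors T _ a (∑ t ∈ β, f t)) hf

variable {Φ : Finset (ℕ → ℕ) → Stage_s4 p D} {ι : Type*} [LinearOrder ι] {G : ι → Finset (ℕ → ℕ)}
  {f : ι → ℕ → ℕ} {P : ℕ → ℕ}

/-- The partial tuples of the stages of all proper subsets of `G`. -/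
def earlierTuples (Φ : Finset (ℕ → ℕ) → Stage_s4 p D) (G : Finset (ℕ → ℕ)) : Set PartialTuple :=
  ⋃ c ∈ Φ '' Set.Iio G, c.tuples

lemma tuples_subset_earlierTuples {F G : Finset (ℕ → ℕ)} (h : F ⊂ G) :
    (Φ F).tuples ⊆ earlierTuples Φ G :=
  Set.subset_biUnion_of_mem (u := tuples) (Set.mem_image_of_mem Φ h)

lemma exists_mem_tuples_of_prefix (hΦ : ∀ G, Follows T G (Φ '' Set.Iio G) (Φ G)) (hG : StrictMono G)
    (hf : ∀ i, f i ∈ G i) (hP : P ∈ T) {l : List ℕ} {b : Finset ι} (hb : b.Nonempty)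
    (hl : ∀ i ∈ b, l ∈ prefixes (earlierTuples Φ (G i))) :
    ∃ k ∈ b, (⟨l, ∑ i ∈ b, (Φ (G i)).base, ∑ i ∈ b, ∑ t ∈ (Φ (G i)).block, f i t, P⟩ :
      PartialTuple) ∈ (Φ (G k)).tuples := by
  induction b using Finset.induction_on_max with
  | empty => simp at hb
  | insert j b hj ih =>
    refine ⟨j, Finset.mem_insert_self j b, (hΦ (G j)).successors_subset (f j) (hf j) ?_⟩
    rw [Finset.forall_mem_insert] at hl
    rcases b.eq_empty_or_nonempty with rfl | hne
    · simp only [insert_empty_eq, Finset.sum_singleton]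
      exact .inr (Set.mem_image2_of_mem hl.1 hP)
    · obtain ⟨k, hk, hmem⟩ := ih hne hl.2
      have hjb : j ∉ b := fun h ↦ (hj j h).false
      rw [Finset.sum_insert hjb, Finset.sum_insert hjb, add_comm (Φ (G j)).base,
        add_comm (∑ t ∈ (Φ (G j)).block, f j t)]
      exact .inl ⟨_, tuples_subset_earlierTuples (hG (hj k hk)) hmem, rfl⟩

lemma entry_mem_of_follows (hΦ : ∀ G, Follows T G (Φ '' Set.Iio G) (Φ G)) (hG : StrictMono G)
    (hf : ∀ i, f i ∈ G i) {m : ℕ} {b : Fin m → Finset ι} (hb : ∀ l, (b l).Nonempty)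
    (hlt : ∀ l l', l < l' → ∀ i ∈ b l, ∀ j ∈ b l', i < j) {P : Fin m → ℕ → ℕ} (hP : ∀ l, P l ∈ T)
    {v : Fin m → ℕ} (hv : ∀ l, v l = ∑ i ∈ b l, (Φ (G i)).base +
      P l (∑ i ∈ b l, ∑ t ∈ (Φ (G i)).block, f i t)) (l : Fin m) :
    v l ∈ D ((List.ofFn v).take l) := by
  have hprefix : ∀ k (hk : k < m), ∀ i ∈ b ⟨k, hk⟩,
      (List.ofFn v).take k ∈ prefixes (earlierTuples Φ (G i)) := by
    intro k
    induction k with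
    | zero => exact fun _ _ _ ↦ Set.mem_insert _ _
    | succ k ih =>
      intro hk i hi
      have hk' : k < m := k.lt_succ_self.trans hk
      obtain ⟨j, hj, hmem⟩ :=
        exists_mem_tuples_of_prefix hΦ hG hf (hP ⟨k, hk'⟩) (hb ⟨k, hk'⟩) (ih hk')
      have hji : j < i := hlt ⟨k, hk'⟩ ⟨k + 1, hk⟩ (Fin.mk_lt_mk.2 k.lt_succ_self) j hj i hi
      refine .inr ⟨_, tuples_subset_earlierTuples (hG hji) hmem, ?_⟩
      rw [List.take_succ_eq_append_getElem (by simpa using hk'), List.getElem_ofFn, hv]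
      rfl
  obtain ⟨k, -, hmem⟩ := exists_mem_tuples_of_prefix hΦ hG hf (hP l) (hb l) (hprefix l l.2)
  rw [hv l]
  exact ((Φ (G k)).admissible _ hmem).2.1

end Stage_s4

theorem multidimensional_stronger_polynomial_CST_I_general {m : ℕ} {p : Ultrafilter ℕ}
    (hp : IdempotentUF p) (hJ : ∀ A ∈ p, IsPolyJSet A) {A : Set (Fin m → ℕ)}
    (hA : A ∈ tensor m fun _ ↦ p) {T : Finset (ℕ → ℕ)} (hT : ∀ P ∈ T, IsPolyZeroConst P) :
    ∃ (α : Finset (ℕ → ℕ) → ℕ) (H : Finset (ℕ → ℕ) → Finset ℕ),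
      (∀ F, (H F).Nonempty) ∧ (∀ F G, F ⊂ G → ∀ x ∈ H F, ∀ y ∈ H G, x < y) ∧
      ∀ {ι : Type*} [LinearOrder ι] (G : ι → Finset (ℕ → ℕ)), StrictMono G →
        ∀ f : ι → ℕ → ℕ, (∀ i, f i ∈ G i) → ∀ β : Fin m → Finset ι, (∀ l, (β l).Nonempty) →
          (∀ l l', l < l' → ∀ x ∈ β l, ∀ y ∈ β l', x < y) →
          ∀ P : Fin m → ℕ → ℕ, (∀ l, P l ∈ T) →
          (fun l ↦ (∑ i ∈ β l, α (G i)) + P l (∑ i ∈ β l, ∑ t ∈ H (G i), f i t)) ∈ A := by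
  classical
  obtain ⟨D, hD, hDA⟩ := exists_tree_of_mem_tensor hA
  obtain ⟨Φ, hΦ⟩ := exists_forall_rel_image_Iio (r := Stage_s4.Follows (p := p) (D := D) T)
    (fun G ↦ Set.finite_Iio G) fun G _ hC ↦ Stage_s4.exists_follows hp hJ hD hT G hC
  refine ⟨fun G ↦ (Φ G).base, fun G ↦ (Φ G).block, fun F ↦ (Φ F).block_nonempty,
    fun F G hFG ↦ (hΦ G).block_lt _ (Set.mem_image_of_mem Φ hFG), ?_⟩
  intro ι _ G hG f hf β hβ hlt P hP
  exact hDA _ (Stage_s4.entry_mem_of_follows hΦ hG hf hβ hlt hP fun _ ↦ rfl)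

/-- Multidimensional Stronger Polynomial Central Sets Theorem I (finitary form). -/
theorem multidimensional_stronger_polynomial_CST_I (m : ℕ) (hm : 1 ≤ m)
    (p : Ultrafilter ℕ) (hp : IsMinimalIdempotent p)
    (A : Set (Fin m → ℕ)) (hA : A ∈ tensor m fun _ => p)
    (T : Finset (ℕ → ℕ)) (hT : T.Nonempty) (hTP : ∀ P ∈ T, IsPolyZeroConst P) :
    ∃ (α : Finset (ℕ → ℕ) → ℕ) (H : Finset (ℕ → ℕ) → Finset ℕ),
      (∀ F : Finset (ℕ → ℕ), F.Nonempty → (H F).Nonempty) ∧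
      (∀ F G : Finset (ℕ → ℕ), F.Nonempty → F ⊂ G →
        ∀ x ∈ H F, ∀ y ∈ H G, x < y) ∧
      (∀ n : ℕ, m ≤ n → ∀ G : Fin n → Finset (ℕ → ℕ),
        (∀ i, (G i).Nonempty) → (∀ i j, i < j → G i ⊂ G j) →
        ∀ f : Fin n → ℕ → ℕ, (∀ i, f i ∈ G i) →
        ∀ β : Fin m → Finset (Fin n),
          (∀ l, (β l).Nonempty) →
          (∀ l l' : Fin m, l < l' → ∀ x ∈ β l, ∀ y ∈ β l', x < y) →
          ∀ P : Fin m → ℕ → ℕ, (∀ l, P l ∈ T) →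
          (fun l => (∑ i ∈ β l, α (G i)) +
              P l (∑ i ∈ β l, ∑ t ∈ H (G i), f i t)) ∈ A) := by
  obtain ⟨α, H, hne, hlt, hmem⟩ :=
    multidimensional_stronger_polynomial_CST_I_general hp.1 hp.isPolyJSet hA hTP
  exact ⟨α, H, fun F _ ↦ hne F, fun F G _ ↦ hlt F G, fun n _ G _ hG ↦ hmem G hG⟩

end MultiCST
end
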